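/- arXiv:2007.07826 — 5 statements merged into one kernel-verified Lean document; each statement's English description precedes it below -/
import Mathlib

section
/- With the notation of the context: HL^d(A, L, Φ) holds if and only if PD^d(A, Φ) holds and, for every 0 ≤ k ≤ d/2, the map L^{d−2k} : A^k → A^{d−k} is an isomorphism. -/
/-!
If `L ^ (d - 2k)` maps `A k` onto `A (d - k)`, then the Hodge–Riemann form on `A k` is the pairing
`Φ : A k × A (d - k) → K` transported along this map. Since `Φ` is the orthogonal sum of these
pairings, its non-degeneracy is equivalent to theirs. For hard Lefschetz ⇒ Poincaré duality, the
self-adjointness of `L` does two things: it shows that the kernel of `L ^ (d - 2k)` on `A k` lies in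
the radical of the Hodge–Riemann form, so that equality of dimensions makes `L ^ (d - 2k)`
bijective, and it transports the form to the pairings `A (d - k) × A k` above the middle degree.
-/

open Module

namespace PaperHR

variable {V : Type} [AddCommGroup V] [Module ℝ V]

/-- Weak Poincaré duality `WPD^d`: `dim A^k = dim A^{d-k}` for every `k`. -/
def WPD (d : ℕ) (A : ℤ → Submodule ℝ V) : Prop :=
  ∀ k : ℤ, finrank ℝ (A k) = finrank ℝ (A (d - k))

/-- Poincaré duality `PD^d(A, Φ)`: the bilinear form `Φ` is non-degenerate. -/
def PD (Φ : V →ₗ[ℝ] V →ₗ[ℝ] ℝ) : Prop :=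
  ∀ x : V, (∀ y : V, Φ x y = 0) → x = 0

/-- The Hodge–Riemann form in degree `k`: `Q(a,b) = Φ(a, L^{d-2k} b)`. -/
def Q (Φ : V →ₗ[ℝ] V →ₗ[ℝ] ℝ) (L : V →ₗ[ℝ] V) (d k : ℕ) (x y : V) : ℝ :=
  Φ x ((L ^ (d - 2 * k)) y)

/-- Non-degeneracy of the form `Q` on `⨁_{0 ≤ k ≤ d/2} A^k`.  Since distinct graded
pieces `A^j`, `A^k` (`j ≠ k`) are orthogonal for `Q` by definition, this is equivalent to
the non-degeneracy of the restriction of `Q` to each graded piece `A^k`, `2k ≤ d`. -/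
def QNondeg (d : ℕ) (A : ℤ → Submodule ℝ V) (Φ : V →ₗ[ℝ] V →ₗ[ℝ] ℝ) (L : V →ₗ[ℝ] V) : Prop :=
  ∀ k : ℕ, 2 * k ≤ d → ∀ x ∈ A (k : ℤ), (∀ y ∈ A (k : ℤ), Q Φ L d k x y = 0) → x = 0

/-- Hard Lefschetz `HL^d(A, L, Φ)`. -/
def HL (d : ℕ) (A : ℤ → Submodule ℝ V) (Φ : V →ₗ[ℝ] V →ₗ[ℝ] ℝ) (L : V →ₗ[ℝ] V) : Prop :=
  WPD d A ∧ QNondeg d A Φ L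

/-- The maximal dimension of a subspace of `S` on which the form `B` is positive definite. -/
noncomputable def maxPosDim (B : V → V → ℝ) (S : Submodule ℝ V) : ℕ :=
  sSup {m : ℕ | ∃ T : Submodule ℝ V, T ≤ S ∧ finrank ℝ T = m ∧ ∀ x ∈ T, x ≠ 0 → 0 < B x x}

/-- The maximal dimension of a subspace of `S` on which the form `B` is negative definite. -/
noncomputable def maxNegDim (B : V → V → ℝ) (S : Submodule ℝ V) : ℕ :=
  sSup {m : ℕ | ∃ T : Submodule ℝ V, T ≤ S ∧ finrank ℝ T = m ∧ ∀ x ∈ T, x ≠ 0 → B x x < 0}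

/-- The signature of the restriction of the form `B` to `S`. -/
noncomputable def signature (B : V → V → ℝ) (S : Submodule ℝ V) : ℤ :=
  (maxPosDim B S : ℤ) - (maxNegDim B S : ℤ)

/-- Hodge–Riemann `HR^d(A, L, Φ)`. -/
def HR (d : ℕ) (A : ℤ → Submodule ℝ V) (Φ : V →ₗ[ℝ] V →ₗ[ℝ] ℝ) (L : V →ₗ[ℝ] V) : Prop :=
  WPD d A ∧ ∀ k : ℕ, 2 * k ≤ d →
    signature (Q Φ L d k) (A (k : ℤ)) =
      ∑ i ∈ Finset.range (k + 1),
        (-1 : ℤ) ^ i * ((finrank ℝ (A (i : ℤ)) : ℤ) - (finrank ℝ (A ((i : ℤ) - 1)) : ℤ))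

end PaperHR

namespace PaperHR

section SeparatingLeftOn

variable {R M M' N N' P : Type*} [CommSemiring R] [AddCommMonoid M] [Module R M]
  [AddCommMonoid M'] [Module R M'] [AddCommMonoid N] [Module R N] [AddCommMonoid N'] [Module R N']
  [AddCommMonoid P] [Module R P]

/-- The restriction of a bilinear map `B` to `S × T` has trivial left kernel: the analogue of
`LinearMap.SeparatingLeft` for a pair of submodules. -/
def SeparatingLeftOn (B : M →ₗ[R] N →ₗ[R] P) (S : Submodule R M) (T : Submodule R N) : Prop :=
  ∀ x ∈ S, (∀ y ∈ T, B x y = 0) → x = 0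

namespace SeparatingLeftOn

variable {S : Submodule R M} {T : Submodule R N}

theorem bot_left (B : M →ₗ[R] N →ₗ[R] P) (T : Submodule R N) : SeparatingLeftOn B ⊥ T :=
  fun _ hx _ ↦ (Submodule.mem_bot R).1 hx

theorem eq_bot {B : M →ₗ[R] N →ₗ[R] P} (h : SeparatingLeftOn B S ⊥) : S = ⊥ :=
  S.eq_bot_iff.2 fun x hx ↦ h x hx fun y hy ↦ by rw [(Submodule.mem_bot R).1 hy, map_zero]

theorem compl₂ {B : M →ₗ[R] N →ₗ[R] P} {f : N' →ₗ[R] N} {T' : Submodule R N'}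
    (h : SeparatingLeftOn B S T) (hf : Set.SurjOn f T' T) :
    SeparatingLeftOn (B.compl₂ f) S T' := by
  refine fun x hx hzero ↦ h x hx fun y hy ↦ ?_
  obtain ⟨z, hz, rfl⟩ := hf hy
  exact hzero z hz

theorem of_compl₂ {B : M →ₗ[R] N →ₗ[R] P} {f : N' →ₗ[R] N} {T' : Submodule R N'}
    (h : SeparatingLeftOn (B.compl₂ f) S T') (hf : Set.MapsTo f T' T) :
    SeparatingLeftOn B S T :=
  fun x hx hzero ↦ h x hx fun z hz ↦ hzero (f z) (hf hz)

theorem of_comp {B : M' →ₗ[R] N →ₗ[R] P} {f : M →ₗ[R] M'} {S' : Submodule R M'}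
    (h : SeparatingLeftOn (B ∘ₗ f) S T) (hf : Set.SurjOn f S S') :
    SeparatingLeftOn B S' T := by
  intro x hx hzero
  obtain ⟨z, hz, rfl⟩ := hf hx
  rw [h z hz hzero, map_zero]

end SeparatingLeftOn

theorem separatingLeft_iff_forall_separatingLeftOn {ι : Type*} {B : M →ₗ[R] N →ₗ[R] P}
    {S : ι → Submodule R M} {T : ι → Submodule R N} (hS : ⨆ i, S i = ⊤) (hT : ⨆ i, T i = ⊤)
    (horth : ∀ i j, i ≠ j → ∀ x ∈ S i, ∀ y ∈ T j, B x y = 0) :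
    B.SeparatingLeft ↔ ∀ i, SeparatingLeftOn B (S i) (T i) := by
  constructor
  · intro h i x hx hzero
    have hker : ⨆ j, T j ≤ LinearMap.ker (B x) := iSup_le fun j y hy ↦ by
      rcases eq_or_ne i j with rfl | hij
      · exact hzero y hy
      · exact horth i j hij x hx y hy
    exact h x fun y ↦ hker (hT ▸ Submodule.mem_top)
  · intro h x hzero
    obtain ⟨c, hc, rfl⟩ := (Submodule.mem_iSup_iff_exists_finsupp S x).1 (hS ▸ Submodule.mem_top)
    have pairing_eq : ∀ i, ∀ y ∈ T i, B (c.sum fun _ z ↦ z) y = B (c i) y := by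
      intro i y hy
      rw [Finsupp.sum, map_sum, LinearMap.sum_apply]
      refine Finset.sum_eq_single i (fun j _ hji ↦ horth j i hji _ (hc j) y hy) fun hi ↦ ?_
      rw [Finsupp.notMem_support_iff.1 hi, map_zero, LinearMap.zero_apply]
    have component_eq_zero : ∀ i, c i = 0 := fun i ↦
      h i _ (hc i) fun y hy ↦ (pairing_eq i y hy).symm.trans (hzero y)
    exact Finset.sum_eq_zero fun i _ ↦ component_eq_zero i

theorem isSelfAdjoint_pow {B : M →ₗ[R] M →ₗ[R] P} {f : Module.End R M} (hf : B.IsSelfAdjoint f)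
    (n : ℕ) : B.IsSelfAdjoint ⇑(f ^ n) := by
  induction n with
  | zero => exact LinearMap.isAdjointPair_one
  | succ n ih =>
    have hmul := ih.mul hf
    rwa [← pow_succ, ← pow_succ'] at hmul

theorem comp_pow_eq_compl₂_pow {B : M →ₗ[R] M →ₗ[R] P} {f : Module.End R M}
    (hf : B.IsSelfAdjoint f) (n : ℕ) : B ∘ₗ (f ^ n) = B.compl₂ (f ^ n) :=
  LinearMap.isAdjointPair_iff_comp_eq_compl₂.1 (isSelfAdjoint_pow hf n)

end SeparatingLeftOn

theorem SeparatingLeftOn.injOn_of_comp {R M M' N P : Type*} [CommRing R] [AddCommGroup M]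
    [Module R M] [AddCommGroup M'] [Module R M'] [AddCommMonoid N] [Module R N] [AddCommMonoid P]
    [Module R P] {B : M' →ₗ[R] N →ₗ[R] P} {f : M →ₗ[R] M'} {S : Submodule R M} {T : Submodule R N}
    (h : SeparatingLeftOn (B ∘ₗ f) S T) : Set.InjOn f S :=
  (Set.injOn_iff_map_eq_zero f S).2 fun x hx hfx ↦ h x hx fun y _ ↦ by
    rw [LinearMap.comp_apply, hfx, map_zero, LinearMap.zero_apply]

section BijOn

variable {R M N : Type*} [Ring R] [AddCommGroup M] [Module R M] [AddCommGroup N] [Module R N]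
  {f : M →ₗ[R] N} {S : Submodule R M} {T : Submodule R N}

theorem bijOn_iff_map_eq_and_forall :
    Set.BijOn f S T ↔ S.map f = T ∧ ∀ x ∈ S, f x = 0 → x = 0 := by
  rw [← Set.injOn_iff_map_eq_zero, ← SetLike.coe_set_eq, Submodule.map_coe]
  exact ⟨fun h ↦ ⟨h.image_eq, h.injOn⟩, fun h ↦ h.1 ▸ h.2.bijOn_image⟩

theorem finrank_eq_of_bijOn (hf : Set.BijOn f S T) : finrank R S = finrank R T :=
  (LinearEquiv.ofBijective (f.restrict hf.mapsTo) hf.bijective).finrank_eq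

end BijOn

theorem bijOn_of_injOn_of_finrank_eq {K V W : Type*} [DivisionRing K] [AddCommGroup V] [Module K V]
    [AddCommGroup W] [Module K W] {f : V →ₗ[K] W} {S : Submodule K V} {T : Submodule K W}
    [FiniteDimensional K T] (hmaps : Set.MapsTo f S T) (hinj : Set.InjOn f S)
    (hdim : finrank K S = finrank K T) : Set.BijOn f S T := by
  have hbij : Set.BijOn f S (S.map f) := hinj.bijOn_image
  have hle : S.map f ≤ T := Submodule.map_le_iff_le_comap.2 hmaps
  rwa [Submodule.eq_of_le_of_finrank_eq hle ((finrank_eq_of_bijOn hbij).symm.trans hdim)] at hbij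

theorem mapsTo_iterate_of_mapsTo_add_one {α ι : Type*} [AddMonoidWithOne ι] {f : α → α}
    {s : ι → Set α} (hf : ∀ i, Set.MapsTo f (s i) (s (i + 1))) (i : ι) (n : ℕ) :
    Set.MapsTo f^[n] (s i) (s (i + n)) := by
  induction n with
  | zero => simpa using Set.mapsTo_id (s i)
  | succ n ih =>
    rw [Function.iterate_succ', Nat.cast_succ, ← add_assoc]
    exact (hf _).comp ih

theorem degree_cases (d : ℕ) (j : ℤ) :
    (j < 0 ∨ (d : ℤ) < j) ∨ ∃ k : ℕ, 2 * k ≤ d ∧ (j = k ∨ j = d - k) := by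
  by_cases hj : 2 * j ≤ d
  · rcases lt_or_ge j 0 with hneg | hnonneg
    · exact .inl (.inl hneg)
    · exact .inr ⟨j.toNat, by lia⟩
  · rcases lt_or_ge (d : ℤ) j with hgt | hle
    · exact .inl (.inr hgt)
    · exact .inr ⟨(d - j).toNat, by lia⟩

section Graded

variable {K V : Type*} [Field K] [AddCommGroup V] [Module K V] {d : ℕ} {A : ℤ → Submodule K V}
  {Φ : V →ₗ[K] V →ₗ[K] K} {L : V →ₗ[K] V}

theorem mapsTo_lefschetz_pow (hL : ∀ k : ℤ, ∀ x ∈ A k, L x ∈ A (k + 1)) {k : ℕ} (hk : 2 * k ≤ d) :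
    Set.MapsTo (L ^ (d - 2 * k)) (A k) (A (d - k)) := by
  have hmaps := mapsTo_iterate_of_mapsTo_add_one (s := fun i ↦ (A i : Set V)) hL k (d - 2 * k)
  rwa [← Module.End.coe_pow, show (k : ℤ) + (d - 2 * k : ℕ) = d - k by lia] at hmaps

theorem bijOn_lefschetz_pow {k : ℕ} [FiniteDimensional K (A (d - k))]
    (hL : ∀ k : ℤ, ∀ x ∈ A k, L x ∈ A (k + 1)) (hLadj : Φ.IsSelfAdjoint L) (hk : 2 * k ≤ d)
    (hdim : finrank K (A k) = finrank K (A (d - k)))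
    (hQ : SeparatingLeftOn (Φ.compl₂ (L ^ (d - 2 * k))) (A k) (A k)) :
    Set.BijOn (L ^ (d - 2 * k)) (A k) (A (d - k)) := by
  rw [← comp_pow_eq_compl₂_pow hLadj] at hQ
  exact bijOn_of_injOn_of_finrank_eq (mapsTo_lefschetz_pow hL hk) hQ.injOn_of_comp hdim

theorem separatingLeftOn_of_hardLefschetz [∀ k, FiniteDimensional K (A k)]
    (hAneg : ∀ k < 0, A k = ⊥) (hLadj : Φ.IsSelfAdjoint L)
    (hdim : ∀ k : ℤ, finrank K (A k) = finrank K (A (d - k)))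
    (hQ : ∀ k : ℕ, 2 * k ≤ d → SeparatingLeftOn (Φ.compl₂ (L ^ (d - 2 * k))) (A k) (A k))
    (hbij : ∀ k : ℕ, 2 * k ≤ d → Set.BijOn (L ^ (d - 2 * k)) (A k) (A (d - k))) (j : ℤ) :
    SeparatingLeftOn Φ (A j) (A (d - j)) := by
  rcases degree_cases d j with (hneg | hgt) | ⟨k, hk, rfl | rfl⟩
  · exact hAneg j hneg ▸ .bot_left Φ _
  · have hbot : A j = ⊥ := by
      rw [← Submodule.finrank_eq_zero (R := K), hdim, hAneg _ (by lia), finrank_bot]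
    exact hbot ▸ .bot_left Φ _
  · exact (hQ k hk).of_compl₂ (hbij k hk).mapsTo
  · have hQ' := hQ k hk
    rw [← comp_pow_eq_compl₂_pow hLadj] at hQ'
    rw [sub_sub_cancel]
    exact hQ'.of_comp (hbij k hk).surjOn

theorem finrank_eq_of_lefschetz_bijOn (hAneg : ∀ k < 0, A k = ⊥)
    (hΦ : ∀ j : ℤ, SeparatingLeftOn Φ (A j) (A (d - j)))
    (hbij : ∀ k : ℕ, 2 * k ≤ d → Set.BijOn (L ^ (d - 2 * k)) (A k) (A (d - k))) (j : ℤ) :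
    finrank K (A j) = finrank K (A (d - j)) := by
  have eq_bot_above : ∀ i : ℤ, d < i → A i = ⊥ := fun i hi ↦
    (hAneg (d - i) (by lia) ▸ hΦ i).eq_bot
  rcases degree_cases d j with (hneg | hgt) | ⟨k, hk, rfl | rfl⟩
  · rw [hAneg j hneg, eq_bot_above _ (by lia)]
  · rw [eq_bot_above j hgt, hAneg _ (by lia)]
  · exact finrank_eq_of_bijOn (hbij k hk)
  · rw [sub_sub_cancel]
    exact (finrank_eq_of_bijOn (hbij k hk)).symm

theorem separatingLeft_iff_forall_degree (hA : ⨆ k, A k = ⊤)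
    (hΦorth : ∀ j k : ℤ, j + k ≠ (d : ℤ) → ∀ x ∈ A j, ∀ y ∈ A k, Φ x y = 0) :
    Φ.SeparatingLeft ↔ ∀ j : ℤ, SeparatingLeftOn Φ (A j) (A (d - j)) :=
  separatingLeft_iff_forall_separatingLeftOn hA
    (((Equiv.subLeft (d : ℤ)).iSup_comp (g := A)).trans hA) fun i j hij ↦ hΦorth i (d - j) (by lia)

theorem statement1_general [∀ k, FiniteDimensional K (A k)] (hA : ⨆ k, A k = ⊤)
    (hAneg : ∀ k < 0, A k = ⊥)
    (hΦorth : ∀ j k : ℤ, j + k ≠ (d : ℤ) → ∀ x ∈ A j, ∀ y ∈ A k, Φ x y = 0)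
    (hL : ∀ k : ℤ, ∀ x ∈ A k, L x ∈ A (k + 1)) (hLadj : Φ.IsSelfAdjoint L) :
    ((∀ k : ℤ, finrank K (A k) = finrank K (A (d - k))) ∧
      ∀ k : ℕ, 2 * k ≤ d → SeparatingLeftOn (Φ.compl₂ (L ^ (d - 2 * k))) (A k) (A k)) ↔
    (Φ.SeparatingLeft ∧
      ∀ k : ℕ, 2 * k ≤ d → Set.BijOn (L ^ (d - 2 * k)) (A k) (A (d - k))) := by
  rw [separatingLeft_iff_forall_degree hA hΦorth]
  constructor
  · rintro ⟨hdim, hQ⟩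
    have hbij : ∀ k : ℕ, 2 * k ≤ d → Set.BijOn (L ^ (d - 2 * k)) (A k) (A (d - k)) :=
      fun k hk ↦ bijOn_lefschetz_pow hL hLadj hk (hdim k) (hQ k hk)
    exact ⟨separatingLeftOn_of_hardLefschetz hAneg hLadj hdim hQ hbij, hbij⟩
  · rintro ⟨hΦ, hbij⟩
    exact ⟨finrank_eq_of_lefschetz_bijOn hAneg hΦ hbij,
      fun k hk ↦ (hΦ k).compl₂ (hbij k hk).surjOn⟩

end Graded

end PaperHR

open PaperHR in
/-- `HL^d(A, L, Φ)` holds if and only if `PD^d(A, Φ)` holds and, for every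
`0 ≤ k ≤ d/2`, the map `L^{d-2k} : A^k → A^{d-k}` is an isomorphism. -/
theorem statement1
    {V : Type} [AddCommGroup V] [Module ℝ V] [FiniteDimensional ℝ V]
    (d : ℕ) (A : ℤ → Submodule ℝ V)
    (hA : DirectSum.IsInternal A)
    (hAneg : ∀ k : ℤ, k < 0 → A k = ⊥)
    (Φ : V →ₗ[ℝ] V →ₗ[ℝ] ℝ)
    (hΦsymm : ∀ x y : V, Φ x y = Φ y x)
    (hΦorth : ∀ j k : ℤ, j + k ≠ (d : ℤ) → ∀ x ∈ A j, ∀ y ∈ A k, Φ x y = 0)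
    (L : V →ₗ[ℝ] V)
    (hL : ∀ k : ℤ, ∀ x ∈ A k, L x ∈ A (k + 1))
    (hLadj : ∀ x y : V, Φ (L x) y = Φ x (L y)) :
    HL d A Φ L ↔
      (PD Φ ∧ ∀ k : ℕ, 2 * k ≤ d →
        (Submodule.map (L ^ (d - 2 * k)) (A (k : ℤ)) = A ((d : ℤ) - (k : ℤ)) ∧
          ∀ x ∈ A (k : ℤ), (L ^ (d - 2 * k)) x = 0 → x = 0)) := by
  simp only [← bijOn_iff_map_eq_and_forall]
  exact statement1_general hA.submodule_iSup_eq_top hAneg hΦorth hL hLadj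
end

section
/- With the notation of the context: HR^d(A, L, Φ) holds if and only if WPD^d(A) holds and, for every 0 ≤ k ≤ d/2, the restriction of (−1)^k Q to the primitive part A^k_prim is positive definite. -/
open Module

/-!
Write `Q_k` for the Hodge–Riemann form in degree `k`. If `L^(d-2k)` is injective on `A^k`, weak
Poincaré duality makes it a bijection onto `A^(d-k)`, so `(a, p) ↦ L a + p` identifies
`A^k ⊕ A^(k+1)_prim` with `A^(k+1)`; self-adjointness of `L` turns this into an isometry between
`Q_k ⊕ Q_(k+1)` and `Q_(k+1)`. Given the signature of `Q_k`, the signature condition in degree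
`k+1` therefore says that `(-1)^(k+1) Q_(k+1)` has signature `dim A^(k+1)_prim` on the primitive
part, that is, it is positive definite there. Definiteness in turn makes `L^(d-2(k+1))` injective
on `A^(k+1)`, because its kernel consists of primitive vectors that are isotropic for `Q_(k+1)`,
and the argument continues by induction on the degree.
-/

namespace PaperHR

open QuadraticMap

section Signature

lemma weightedSumSquares_sumElim_equivalent_prod {R ι κ : Type*} [CommSemiring R] [Fintype ι]
    [Fintype κ] (w : ι → R) (w' : κ → R) :
    (weightedSumSquares R (Sum.elim w w')).Equivalent
      ((weightedSumSquares R w).prod (weightedSumSquares R w')) :=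
  ⟨{ LinearEquiv.sumArrowLequivProdArrow ι κ R R with
      map_app' := fun v ↦ by simp [weightedSumSquares_apply] }⟩

variable {𝕜 : Type*} [Field 𝕜] [LinearOrder 𝕜]
  {M M' : Type*} [AddCommGroup M] [Module 𝕜 M] [AddCommGroup M'] [Module 𝕜 M']

/-- The signature `p - q` of a quadratic form with `p` positive and `q` negative squares. -/
noncomputable def quadraticSignature (q : QuadraticForm 𝕜 M) : ℤ :=
  sigPos q - sigNeg q

lemma quadraticSignature_congr {q : QuadraticForm 𝕜 M} {q' : QuadraticForm 𝕜 M'}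
    (h : q.Equivalent q') : quadraticSignature q = quadraticSignature q' := by
  rw [quadraticSignature, quadraticSignature, h.sigPos_eq, h.sigNeg_eq]

lemma quadraticSignature_neg (q : QuadraticForm 𝕜 M) :
    quadraticSignature (-q) = -quadraticSignature q := by
  rw [quadraticSignature, quadraticSignature, sigPos_neg, sigNeg_neg, neg_sub]

lemma quadraticSignature_neg_one_pow_smul (q : QuadraticForm 𝕜 M) (k : ℕ) :
    quadraticSignature ((-1 : 𝕜) ^ k • q) = (-1) ^ k * quadraticSignature q := by
  rcases k.even_or_odd with hk | hk
  · rw [hk.neg_one_pow, hk.neg_one_pow, one_smul, one_mul]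
  · have hneg : (-1 : 𝕜) • q = -q := by ext; simp
    rw [hk.neg_one_pow, hk.neg_one_pow, hneg, neg_one_mul, quadraticSignature_neg]

lemma quadraticSignature_eq_zero_of_subsingleton [Subsingleton M] (q : QuadraticForm 𝕜 M) :
    quadraticSignature q = 0 := by
  have hpos := sigPos_le_finrank q
  have hneg := sigPos_le_finrank (-q)
  rw [finrank_zero_of_subsingleton, Nat.le_zero] at hpos hneg
  rw [quadraticSignature, hpos, ← sigPos_neg, hneg, sub_self]

lemma sigPos_eq_finrank_iff_posDef [FiniteDimensional 𝕜 M] {q : QuadraticForm 𝕜 M} :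
    sigPos q = finrank 𝕜 M ↔ q.PosDef := by
  constructor
  · intro h
    obtain ⟨V, hV, hpos⟩ := exists_finrank_eq_sigPos_and_posDef q
    obtain rfl : V = ⊤ := Submodule.eq_top_of_finrank_eq (hV.trans h)
    exact fun x hx ↦ hpos ⟨x, trivial⟩ fun h0 ↦ hx (congrArg Subtype.val h0)
  · intro h
    refine (sigPos_le_finrank q).antisymm ?_
    rw [← finrank_top 𝕜 M]
    exact le_sigPos_of_posDef q fun x hx ↦ h x (by simpa using hx)

variable [IsStrictOrderedRing 𝕜]

lemma sigPos_prod [FiniteDimensional 𝕜 M] [FiniteDimensional 𝕜 M']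
    (q : QuadraticForm 𝕜 M) (q' : QuadraticForm 𝕜 M') :
    sigPos (q.prod q') = sigPos q + sigPos q' := by
  have : Invertible (2 : 𝕜) := invertibleOfNonzero two_ne_zero
  obtain ⟨w, hw⟩ := q.equivalent_weightedSumSquares
  obtain ⟨w', hw'⟩ := q'.equivalent_weightedSumSquares
  have hprod := (hw.prod hw').trans (weightedSumSquares_sumElim_equivalent_prod w w').symm
  rw [QuadraticForm.sigPos_of_equiv_weightedSumSquares hw,
    QuadraticForm.sigPos_of_equiv_weightedSumSquares hw',
    QuadraticForm.sigPos_of_equiv_weightedSumSquares hprod]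
  simp only [← Nat.card_coe_set_eq, Set.coe_ofPred]
  rw [Nat.card_congr Equiv.subtypeSum, Nat.card_sum]
  simp only [Sum.elim_inl, Sum.elim_inr]

lemma sigNeg_prod [FiniteDimensional 𝕜 M] [FiniteDimensional 𝕜 M']
    (q : QuadraticForm 𝕜 M) (q' : QuadraticForm 𝕜 M') :
    sigNeg (q.prod q') = sigNeg q + sigNeg q' := by
  have hneg : -(q.prod q') = (-q).prod (-q') := by ext; simp [add_comm]
  simp only [← sigPos_neg, hneg, sigPos_prod]

lemma quadraticSignature_prod [FiniteDimensional 𝕜 M] [FiniteDimensional 𝕜 M']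
    (q : QuadraticForm 𝕜 M) (q' : QuadraticForm 𝕜 M') :
    quadraticSignature (q.prod q') = quadraticSignature q + quadraticSignature q' := by
  rw [quadraticSignature, quadraticSignature, quadraticSignature, sigPos_prod, sigNeg_prod]
  push_cast
  ring

lemma quadraticSignature_eq_finrank_iff_posDef [FiniteDimensional 𝕜 M]
    {q : QuadraticForm 𝕜 M} : quadraticSignature q = finrank 𝕜 M ↔ q.PosDef := by
  have hrank := QuadraticForm.sigPos_add_sigNeg_add_radical (Q := q)
  rw [← sigPos_eq_finrank_iff_posDef, quadraticSignature]
  lia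

lemma quadraticSignature_eq_neg_one_pow_mul_finrank_iff [FiniteDimensional 𝕜 M]
    {q : QuadraticForm 𝕜 M} {k : ℕ} :
    quadraticSignature q = (-1) ^ k * finrank 𝕜 M ↔ ((-1 : 𝕜) ^ k • q).PosDef := by
  rw [← quadraticSignature_eq_finrank_iff_posDef, quadraticSignature_neg_one_pow_smul]
  rcases k.even_or_odd with hk | hk
  · rw [hk.neg_one_pow, one_mul, one_mul]
  · rw [hk.neg_one_pow, neg_one_mul, neg_one_mul, neg_eq_iff_eq_neg]

end Signature

section LefschetzForm

variable {R V : Type*} [CommRing R] [AddCommGroup V] [Module R V]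

/-- The quadratic form `x ↦ Φ(x, L^m x)`. The Hodge–Riemann form in degree `k` is the case
`m = d - 2k`; indexing by the exponent avoids truncated subtraction. -/
def lefschetzForm (Φ : V →ₗ[R] V →ₗ[R] R) (L : V →ₗ[R] V) (m : ℕ) : QuadraticForm R V :=
  LinearMap.BilinMap.toQuadraticMap (Φ.compl₂ (L ^ m))

/-- The part of `W` that is primitive for `L` with exponent `m`: the vectors killed by `L^(m+1)`.
For `W = A^k` and `m = d - 2k` this is `A^k_prim`. -/
def primitivePart (L : V →ₗ[R] V) (m : ℕ) (W : Submodule R V) : Submodule R V :=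
  W ⊓ LinearMap.ker (L ^ (m + 1))

variable {Φ : V →ₗ[R] V →ₗ[R] R} {L : V →ₗ[R] V} {m : ℕ} {U W : Submodule R V}

lemma lefschetzForm_apply (x : V) : lefschetzForm Φ L m x = Φ x ((L ^ m) x) := rfl

lemma primitivePart_le : primitivePart L m W ≤ W := inf_le_left

lemma pow_succ_apply_eq_zero_of_mem_primitivePart {p : V} (hp : p ∈ primitivePart L m W) :
    (L ^ (m + 1)) p = 0 := hp.2

lemma pow_apply_mem_of_degree_one {A : ℤ → Submodule R V}
    (hL : ∀ k : ℤ, ∀ x ∈ A k, L x ∈ A (k + 1)) (n : ℕ) {k : ℤ} {x : V} (hx : x ∈ A k) :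
    (L ^ n) x ∈ A (k + n) := by
  induction n with
  | zero => simpa using hx
  | succ n ih =>
    rw [pow_succ', Module.End.mul_apply, Nat.cast_succ, ← add_assoc]
    exact hL _ _ ih

lemma isSelfAdjoint_pow_s2 (hL : Φ.IsSelfAdjoint L) (n : ℕ) :
    Φ.IsSelfAdjoint (L ^ n : End R V) := by
  induction n with
  | zero => exact LinearMap.isAdjointPair_one
  | succ n ih =>
    have hmul : Φ.IsAdjointPair Φ (L ^ n * L : End R V) (L * L ^ n : End R V) :=
      LinearMap.IsAdjointPair.mul ih hL
    rwa [← pow_succ, ← pow_succ'] at hmul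

/-- The cross terms vanish because `L` is self-adjoint and `L^(m+1) p = 0`. -/
lemma lefschetzForm_map_add_primitive (hL : Φ.IsSelfAdjoint L) (a : V) {p : V}
    (hp : (L ^ (m + 1)) p = 0) :
    lefschetzForm Φ L m (L a + p) = lefschetzForm Φ L (m + 2) a + lefschetzForm Φ L m p := by
  have hleft : Φ (L a) ((L ^ m) p) = 0 := by
    rw [hL, ← Module.End.mul_apply, ← pow_succ', hp, map_zero]
  have hright : Φ p ((L ^ m) (L a)) = 0 := by
    rw [← Module.End.mul_apply, ← pow_succ, ← isSelfAdjoint_pow_s2 hL, hp, map_zero,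
      LinearMap.zero_apply]
  have hdiag : Φ (L a) ((L ^ m) (L a)) = Φ a ((L ^ (m + 2)) a) := by
    rw [hL, pow_succ, pow_succ', Module.End.mul_apply, Module.End.mul_apply]
  simp only [lefschetzForm_apply, map_add, LinearMap.add_apply, hleft, hright, hdiag, add_zero,
    zero_add]

lemma disjoint_ker_pow_of_primitivePart
    (hprim : Disjoint (primitivePart L m W) (LinearMap.ker (L ^ m))) :
    Disjoint W (LinearMap.ker (L ^ m)) := by
  have hker : LinearMap.ker (L ^ m) ≤ LinearMap.ker (L ^ (m + 1)) := by
    rw [pow_succ']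
    exact LinearMap.ker_le_ker_comp _ _
  rw [primitivePart, disjoint_assoc, inf_eq_right.mpr hker] at hprim
  exact hprim

lemma disjoint_ker_pow_of_anisotropic
    (h : ((lefschetzForm Φ L m).restrict (primitivePart L m W)).Anisotropic) :
    Disjoint W (LinearMap.ker (L ^ m)) := by
  refine disjoint_ker_pow_of_primitivePart <| LinearMap.disjoint_ker.mpr fun x hx hLx ↦ ?_
  refine congrArg Subtype.val <| h ⟨x, hx⟩ ?_
  rw [restrict_apply, lefschetzForm_apply, hLx, map_zero]

/-- The map `(a, p) ↦ L a + p`, which realises the Lefschetz decomposition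
`W = L U ⊕ primitivePart L m W`. -/
def lefschetzSum (L : V →ₗ[R] V) (m : ℕ) {U W : Submodule R V} (hUW : ∀ x ∈ U, L x ∈ W) :
    U × primitivePart L m W →ₗ[R] W :=
  (L.restrict hUW).coprod (Submodule.inclusion primitivePart_le)

lemma coe_lefschetzSum (hUW : ∀ x ∈ U, L x ∈ W) (x : U × primitivePart L m W) :
    (lefschetzSum L m hUW x : V) = L x.1 + x.2 := rfl

lemma pow_succ_lefschetzSum (hUW : ∀ x ∈ U, L x ∈ W) (x : U × primitivePart L m W) :
    (L ^ (m + 1)) (lefschetzSum L m hUW x) = (L ^ (m + 2)) x.1 := by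
  rw [coe_lefschetzSum, map_add, pow_succ_apply_eq_zero_of_mem_primitivePart x.2.2, add_zero,
    ← Module.End.mul_apply, ← pow_succ]

lemma lefschetzSum_injective (hUW : ∀ x ∈ U, L x ∈ W)
    (hinj : Disjoint U (LinearMap.ker (L ^ (m + 2)))) :
    Function.Injective (lefschetzSum L m hUW) := by
  rw [← LinearMap.ker_eq_bot, LinearMap.ker_eq_bot']
  rintro ⟨a, p⟩ hap
  have ha : (a : V) = 0 := LinearMap.disjoint_ker.mp hinj a a.2 <| by
    rw [← pow_succ_lefschetzSum hUW (a, p), hap, Submodule.coe_zero, map_zero]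
  have hp : (p : V) = 0 := by
    simpa [ha] using (coe_lefschetzSum hUW (a, p)).symm.trans (congrArg Subtype.val hap)
  exact Prod.ext (Subtype.ext ha) (Subtype.ext hp)

end LefschetzForm

section LefschetzDecomposition

variable {K V : Type*} [Field K] [AddCommGroup V] [Module K V] {L : V →ₗ[K] V} {m : ℕ}
  {U W U' : Submodule K V}

lemma map_eq_of_finrank_eq_of_disjoint_ker {V' : Type*} [AddCommGroup V'] [Module K V']
    {T : V →ₗ[K] V'} {S : Submodule K V'} [FiniteDimensional K S] (hT : ∀ x ∈ U, T x ∈ S)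
    (hfin : finrank K U = finrank K S) (hinj : Disjoint U (LinearMap.ker T)) :
    U.map T = S := by
  refine Submodule.eq_of_le_of_finrank_eq (Submodule.map_le_iff_le_comap.mpr hT) ?_
  rw [← hfin, ← LinearMap.range_domRestrict]
  exact LinearMap.finrank_range_of_inj (LinearMap.injective_domRestrict_iff.mpr hinj)

lemma lefschetzSum_bijective [FiniteDimensional K U'] (hUW : ∀ x ∈ U, L x ∈ W)
    (hWU' : ∀ x ∈ W, (L ^ (m + 1)) x ∈ U') (hfin : finrank K U = finrank K U')
    (hinj : Disjoint U (LinearMap.ker (L ^ (m + 2)))) :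
    Function.Bijective (lefschetzSum L m hUW) := by
  refine ⟨lefschetzSum_injective hUW hinj, fun w ↦ ?_⟩
  have hshift (x : V) : (L ^ (m + 2)) x = (L ^ (m + 1)) (L x) := by
    rw [pow_succ, Module.End.mul_apply]
  have hmap : U.map (L ^ (m + 2)) = U' :=
    map_eq_of_finrank_eq_of_disjoint_ker (fun x hx ↦ hshift x ▸ hWU' _ (hUW x hx)) hfin hinj
  obtain ⟨a, ha, hwa⟩ : (L ^ (m + 1)) w ∈ U.map (L ^ (m + 2)) := hmap ▸ hWU' w w.2
  have hprim : (w : V) - L a ∈ primitivePart L m W := by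
    refine ⟨W.sub_mem w.2 (hUW a ha), LinearMap.mem_ker.mpr ?_⟩
    rw [map_sub, ← hshift, hwa, sub_self]
  exact ⟨(⟨a, ha⟩, ⟨_, hprim⟩), Subtype.ext (add_sub_cancel _ _)⟩

lemma finrank_add_finrank_primitivePart [FiniteDimensional K U] [FiniteDimensional K W]
    [FiniteDimensional K U'] (hUW : ∀ x ∈ U, L x ∈ W) (hWU' : ∀ x ∈ W, (L ^ (m + 1)) x ∈ U')
    (hfin : finrank K U = finrank K U') (hinj : Disjoint U (LinearMap.ker (L ^ (m + 2)))) :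
    finrank K U + finrank K (primitivePart L m W) = finrank K W := by
  have : FiniteDimensional K (primitivePart L m W) :=
    Submodule.finiteDimensional_of_le primitivePart_le
  rw [← finrank_prod]
  exact (LinearEquiv.ofBijective _ (lefschetzSum_bijective hUW hWU' hfin hinj)).finrank_eq

lemma lefschetzForm_restrict_prod_equivalent [FiniteDimensional K U']
    {Φ : V →ₗ[K] V →ₗ[K] K} (hL : Φ.IsSelfAdjoint L)
    (hUW : ∀ x ∈ U, L x ∈ W) (hWU' : ∀ x ∈ W, (L ^ (m + 1)) x ∈ U')
    (hfin : finrank K U = finrank K U') (hinj : Disjoint U (LinearMap.ker (L ^ (m + 2)))) :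
    (((lefschetzForm Φ L (m + 2)).restrict U).prod
      ((lefschetzForm Φ L m).restrict (primitivePart L m W))).Equivalent
      ((lefschetzForm Φ L m).restrict W) :=
  ⟨{ LinearEquiv.ofBijective _ (lefschetzSum_bijective hUW hWU' hfin hinj) with
      map_app' := fun x ↦ lefschetzForm_map_add_primitive hL x.1 x.2.2.2 }⟩

end LefschetzDecomposition

section HodgeRiemann

variable {𝕜 V : Type*} [Field 𝕜] [LinearOrder 𝕜] [AddCommGroup V] [Module 𝕜 V]
  {Φ : V →ₗ[𝕜] V →ₗ[𝕜] 𝕜} {L : V →ₗ[𝕜] V}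

/-- The Hodge–Riemann signature condition in degree `k`. -/
def HasHodgeRiemannSignature (d : ℕ) (A : ℤ → Submodule 𝕜 V) (Φ : V →ₗ[𝕜] V →ₗ[𝕜] 𝕜)
    (L : V →ₗ[𝕜] V) (k : ℕ) : Prop :=
  quadraticSignature ((lefschetzForm Φ L (d - 2 * k)).restrict (A k)) =
    ∑ i ∈ Finset.range (k + 1),
      (-1 : ℤ) ^ i * ((finrank 𝕜 (A i) : ℤ) - finrank 𝕜 (A ((i : ℤ) - 1)))

/-- The Hodge–Riemann bilinear relation in degree `k`: definiteness, with sign `(-1)^k`, of the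
Hodge–Riemann form on the primitive part. -/
def HodgeRiemannRelation (d : ℕ) (A : ℤ → Submodule 𝕜 V) (Φ : V →ₗ[𝕜] V →ₗ[𝕜] 𝕜)
    (L : V →ₗ[𝕜] V) (k : ℕ) : Prop :=
  ((-1 : 𝕜) ^ k •
    (lefschetzForm Φ L (d - 2 * k)).restrict (primitivePart L (d - 2 * k) (A k))).PosDef

variable {d k : ℕ} {A : ℤ → Submodule 𝕜 V}

lemma HodgeRiemannRelation.disjoint_ker (h : HodgeRiemannRelation d A Φ L k) :
    Disjoint (A k) (LinearMap.ker (L ^ (d - 2 * k))) := by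
  refine disjoint_ker_pow_of_anisotropic (Φ := Φ) fun x hx ↦ h.anisotropic x ?_
  rw [smul_apply, hx, smul_zero]

variable [IsStrictOrderedRing 𝕜]

lemma quadraticSignature_lefschetzForm_eq_add_iff_posDef {m k : ℕ} {U W U' : Submodule 𝕜 V}
    [FiniteDimensional 𝕜 U] [FiniteDimensional 𝕜 W] [FiniteDimensional 𝕜 U']
    (hL : Φ.IsSelfAdjoint L) (hUW : ∀ x ∈ U, L x ∈ W) (hWU' : ∀ x ∈ W, (L ^ (m + 1)) x ∈ U')
    (hfin : finrank 𝕜 U = finrank 𝕜 U') (hinj : Disjoint U (LinearMap.ker (L ^ (m + 2)))) :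
    quadraticSignature ((lefschetzForm Φ L m).restrict W) =
        quadraticSignature ((lefschetzForm Φ L (m + 2)).restrict U) +
          (-1) ^ k * ((finrank 𝕜 W : ℤ) - finrank 𝕜 U) ↔
      ((-1 : 𝕜) ^ k • (lefschetzForm Φ L m).restrict (primitivePart L m W)).PosDef := by
  have : FiniteDimensional 𝕜 (primitivePart L m W) :=
    Submodule.finiteDimensional_of_le primitivePart_le
  have hdim : (finrank 𝕜 W : ℤ) - finrank 𝕜 U = finrank 𝕜 (primitivePart L m W) := by
    rw [← finrank_add_finrank_primitivePart hUW hWU' hfin hinj]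
    push_cast
    ring
  rw [← quadraticSignature_congr (lefschetzForm_restrict_prod_equivalent hL hUW hWU' hfin hinj),
    quadraticSignature_prod, add_right_inj, hdim,
    quadraticSignature_eq_neg_one_pow_mul_finrank_iff]

lemma hasHodgeRiemannSignature_iff_of_pred [∀ k, FiniteDimensional 𝕜 (A k)]
    (hWPD : ∀ k : ℤ, finrank 𝕜 (A k) = finrank 𝕜 (A (d - k)))
    (hL : ∀ k : ℤ, ∀ x ∈ A k, L x ∈ A (k + 1)) (hΦL : Φ.IsSelfAdjoint L) (hk : 2 * k ≤ d)
    (hinj : Disjoint (A ((k : ℤ) - 1)) (LinearMap.ker (L ^ (d - 2 * k + 2))))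
    (hsig : quadraticSignature ((lefschetzForm Φ L (d - 2 * k + 2)).restrict (A ((k : ℤ) - 1))) =
      ∑ i ∈ Finset.range k,
        (-1 : ℤ) ^ i * ((finrank 𝕜 (A i) : ℤ) - finrank 𝕜 (A ((i : ℤ) - 1)))) :
    HasHodgeRiemannSignature d A Φ L k ↔ HodgeRiemannRelation d A Φ L k := by
  have hUW : ∀ x ∈ A ((k : ℤ) - 1), L x ∈ A k := fun x hx ↦ by simpa using hL _ x hx
  have hWU' : ∀ x ∈ A k, (L ^ (d - 2 * k + 1)) x ∈ A (d - ((k : ℤ) - 1)) := fun x hx ↦ by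
    convert pow_apply_mem_of_degree_one hL (d - 2 * k + 1) hx using 2
    lia
  rw [HasHodgeRiemannSignature, Finset.sum_range_succ, ← hsig]
  exact quadraticSignature_lefschetzForm_eq_add_iff_posDef hΦL hUW hWU' (hWPD _) hinj

lemma hasHodgeRiemannSignature_iff_of_forall_lt [∀ k, FiniteDimensional 𝕜 (A k)]
    (hWPD : ∀ k : ℤ, finrank 𝕜 (A k) = finrank 𝕜 (A (d - k))) (hneg : A (-1) = ⊥)
    (hL : ∀ k : ℤ, ∀ x ∈ A k, L x ∈ A (k + 1)) (hΦL : Φ.IsSelfAdjoint L) (hk : 2 * k ≤ d)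
    (hsig : ∀ j < k, HasHodgeRiemannSignature d A Φ L j)
    (hrel : ∀ j < k, HodgeRiemannRelation d A Φ L j) :
    HasHodgeRiemannSignature d A Φ L k ↔ HodgeRiemannRelation d A Φ L k := by
  rcases k with - | j
  · have hbot : A (((0 : ℕ) : ℤ) - 1) = ⊥ := by simpa using hneg
    have : Subsingleton (A (((0 : ℕ) : ℤ) - 1)) := (Submodule.subsingleton_iff_eq_bot).mpr hbot
    exact hasHodgeRiemannSignature_iff_of_pred hWPD hL hΦL hk (hbot ▸ disjoint_bot_left)
      (quadraticSignature_eq_zero_of_subsingleton _)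
  · have hexp : d - 2 * (j + 1) + 2 = d - 2 * j := by lia
    have hdeg : ((j + 1 : ℕ) : ℤ) - 1 = j := by lia
    apply hasHodgeRiemannSignature_iff_of_pred hWPD hL hΦL hk
    · rw [hexp, hdeg]
      exact (hrel j j.lt_succ_self).disjoint_ker
    · rw [hexp, hdeg]
      exact hsig j j.lt_succ_self

end HodgeRiemann

section RealForms

variable {V : Type} [AddCommGroup V] [Module ℝ V] {S : Submodule ℝ V} [FiniteDimensional ℝ S]
  {B : V → V → ℝ} {q : QuadraticForm ℝ V}

lemma maxPosDim_eq_sigPos (hB : ∀ x, B x x = q x) : maxPosDim B S = sigPos (q.restrict S) := by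
  refine Eq.trans (congrArg sSup ?_) (sigPos_isGreatest (q.restrict S)).csSup_eq
  have hposDef (T : Submodule ℝ S) : ((q.restrict S).restrict T).PosDef ↔
      ∀ x ∈ T.map S.subtype, x ≠ 0 → 0 < B x x := by
    simp [PosDef, hB]
  ext r
  constructor
  · rintro ⟨T, hTS, hr, hT⟩
    obtain ⟨T, rfl⟩ : ∃ T' : Submodule ℝ S, T'.map S.subtype = T :=
      ⟨T.comap S.subtype, by rw [Submodule.map_comap_subtype, inf_eq_right.mpr hTS]⟩
    exact ⟨T, by rwa [Submodule.finrank_map_subtype_eq] at hr, (hposDef T).mpr hT⟩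
  · rintro ⟨T, hr, hT⟩
    exact ⟨T.map S.subtype, Submodule.map_subtype_le S T,
      by rwa [Submodule.finrank_map_subtype_eq], (hposDef T).mp hT⟩

lemma maxNegDim_eq_sigNeg (hB : ∀ x, B x x = q x) : maxNegDim B S = sigNeg (q.restrict S) := by
  have hneg : maxNegDim B S = maxPosDim (fun x y ↦ -B x y) S := by
    simp only [maxNegDim, maxPosDim, neg_pos]
  rw [hneg, maxPosDim_eq_sigPos (q := -q) fun x ↦ congrArg Neg.neg (hB x), ← sigPos_neg]
  rfl

lemma signature_eq_quadraticSignature (hB : ∀ x, B x x = q x) :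
    signature B S = quadraticSignature (q.restrict S) := by
  rw [signature, maxPosDim_eq_sigPos hB, maxNegDim_eq_sigNeg hB, quadraticSignature]

variable {d : ℕ} {A : ℤ → Submodule ℝ V} {Φ : V →ₗ[ℝ] V →ₗ[ℝ] ℝ} {L : V →ₗ[ℝ] V}

lemma HR_iff_hasHodgeRiemannSignature [∀ k, FiniteDimensional ℝ (A k)] :
    HR d A Φ L ↔ WPD d A ∧ ∀ k : ℕ, 2 * k ≤ d → HasHodgeRiemannSignature d A Φ L k := by
  have hsig (k : ℕ) := signature_eq_quadraticSignature (S := A k)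
    (B := Q Φ L d k) (q := lefschetzForm Φ L (d - 2 * k)) fun _ ↦ rfl
  simp only [HR, HasHodgeRiemannSignature, hsig]

lemma hodgeRiemannRelation_iff_forall_pos {k : ℕ} : HodgeRiemannRelation d A Φ L k ↔
    ∀ x ∈ A (k : ℤ) ⊓ LinearMap.ker (L ^ (d - 2 * k + 1)), x ≠ 0 →
      0 < (-1 : ℝ) ^ k * Q Φ L d k x x := by
  constructor
  · exact fun h x hx hx0 ↦ h ⟨x, hx⟩ fun h0 ↦ hx0 (congrArg Subtype.val h0)
  · exact fun h x hx ↦ h x x.2 fun h0 ↦ hx (Subtype.ext h0)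

end RealForms

end PaperHR

open PaperHR in
theorem statement2_general {𝕜 V : Type*} [Field 𝕜] [LinearOrder 𝕜] [IsStrictOrderedRing 𝕜]
    [AddCommGroup V] [Module 𝕜 V] {d : ℕ} {A : ℤ → Submodule 𝕜 V}
    [∀ k, FiniteDimensional 𝕜 (A k)] (hWPD : ∀ k : ℤ, finrank 𝕜 (A k) = finrank 𝕜 (A (d - k)))
    (hneg : A (-1) = ⊥) {Φ : V →ₗ[𝕜] V →ₗ[𝕜] 𝕜} {L : V →ₗ[𝕜] V}
    (hL : ∀ k : ℤ, ∀ x ∈ A k, L x ∈ A (k + 1)) (hΦL : Φ.IsSelfAdjoint L) :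
    (∀ k : ℕ, 2 * k ≤ d → HasHodgeRiemannSignature d A Φ L k) ↔
      ∀ k : ℕ, 2 * k ≤ d → HodgeRiemannRelation d A Φ L k := by
  have hiff (k : ℕ) (hk : 2 * k ≤ d) :=
    hasHodgeRiemannSignature_iff_of_forall_lt hWPD hneg hL hΦL hk
  constructor
  · intro hsig k hk
    induction k using Nat.strong_induction_on with
    | _ k ih =>
      exact (hiff k hk (fun j hj ↦ hsig j (by lia)) fun j hj ↦ ih j hj (by lia)).mp (hsig k hk)
  · intro hrel k hk
    induction k using Nat.strong_induction_on with
    | _ k ih =>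
      exact (hiff k hk (fun j hj ↦ ih j hj (by lia)) fun j hj ↦ hrel j (by lia)).mpr (hrel k hk)

open PaperHR in
/-- `HR^d(A, L, Φ)` holds if and only if `WPD^d(A)` holds and, for every
`0 ≤ k ≤ d/2`, the restriction of `(-1)^k Q` to the primitive part
`A^k_prim = ker(L^{d-2k+1}) ∩ A^k` is positive definite. -/
theorem statement2
    {V : Type} [AddCommGroup V] [Module ℝ V] [FiniteDimensional ℝ V]
    (d : ℕ) (A : ℤ → Submodule ℝ V)
    (hA : DirectSum.IsInternal A)
    (hAneg : ∀ k : ℤ, k < 0 → A k = ⊥)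
    (Φ : V →ₗ[ℝ] V →ₗ[ℝ] ℝ)
    (hΦsymm : ∀ x y : V, Φ x y = Φ y x)
    (hΦorth : ∀ j k : ℤ, j + k ≠ (d : ℤ) → ∀ x ∈ A j, ∀ y ∈ A k, Φ x y = 0)
    (L : V →ₗ[ℝ] V)
    (hL : ∀ k : ℤ, ∀ x ∈ A k, L x ∈ A (k + 1))
    (hLadj : ∀ x y : V, Φ (L x) y = Φ x (L y)) :
    HR d A Φ L ↔
      (WPD d A ∧ ∀ k : ℕ, 2 * k ≤ d →
        ∀ x ∈ A (k : ℤ) ⊓ LinearMap.ker (L ^ (d - 2 * k + 1)), x ≠ 0 →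
          0 < (-1 : ℝ) ^ k * Q Φ L d k x x) := by
  simp only [HR_iff_hasHodgeRiemannSignature, ← hodgeRiemannRelation_iff_forall_pos]
  exact and_congr_right fun hWPD ↦ statement2_general hWPD (hAneg (-1) (by norm_num)) hL hLadj
end

section
/- Let (A, L_A, Φ_A) and (B, L_B, Φ_B) be two triples as in the context, with respective integers d_A and d_B. If HR^{d_A}(A, L_A, Φ_A) and HR^{d_B}(B, L_B, Φ_B) hold, then HR^{d_A+d_B}(A ⊗ B, L_A ⊗ id + id ⊗ L_B, Φ_A ⊗ Φ_B) holds, where A ⊗ B is graded by (A⊗B)^m = ⨁_{i+j=m} A^i ⊗ B^j and (Φ_A ⊗ Φ_B)(a⊗b, a'⊗b') = Φ_A(a,a')·Φ_B(b,b'). -/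
open Module

/-!
Signatures are additive along `A^{k-1} → A^k`, whose image is `Q`-orthogonal to the primitive
vectors of degree `k`; hence `HR` means weak Poincaré duality together with the positivity of
`(-1)^k Φ(u, L^{d-2k} u)` on nonzero primitive vectors `u` of degree `k`. This positivity passes to
orthogonal sums of shifted summands and to isometrically embedded graded subspaces. As `B` is an
orthogonal sum of shifted copies of strings `ℝ[x]/(x^{n+1})`, it suffices to treat
`A ⊗ ℝ[x]/(x^{n+1})`. Since `z ↦ x + y` embeds `ℝ[z]/(z^{n+2})` into
`ℝ[x]/(x^{n+1}) ⊗ ℝ[y]/(y²)`, isometrically up to a positive factor, induction on `n` leaves only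
`A ⊗ ℝ[y]/(y²)`, whose primitive vectors can be written down.
-/

namespace PaperHR

section Signature

variable {V W : Type} [AddCommGroup V] [Module ℝ V] [AddCommGroup W] [Module ℝ W]

lemma maxPosDim_neg (B : LinearMap.BilinForm ℝ V) (S : Submodule ℝ V) :
    maxPosDim ((-B) · ·) S = maxNegDim (B · ·) S := by
  simp only [maxPosDim, maxNegDim, LinearMap.neg_apply, neg_pos]

lemma maxNegDim_neg (B : LinearMap.BilinForm ℝ V) (S : Submodule ℝ V) :
    maxNegDim ((-B) · ·) S = maxPosDim (B · ·) S := by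
  simp only [maxPosDim, maxNegDim, LinearMap.neg_apply, neg_lt_zero]

lemma signature_neg (B : LinearMap.BilinForm ℝ V) (S : Submodule ℝ V) :
    signature ((-B) · ·) S = -signature (B · ·) S := by
  simp only [signature, maxPosDim_neg, maxNegDim_neg, neg_sub]

lemma disjoint_of_pos_of_nonpos {B : V → V → ℝ} {T T' : Submodule ℝ V}
    (hT : ∀ x ∈ T, x ≠ 0 → 0 < B x x) (hT' : ∀ x ∈ T', x ≠ 0 → B x x ≤ 0) : Disjoint T T' :=
  Submodule.disjoint_def.2 fun x hx hx' => by_contra fun h0 => (hT x hx h0).not_ge (hT' x hx' h0)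

lemma pos_of_mem_sup {B : LinearMap.BilinForm ℝ V} (hB : ∀ x y, B x y = B y x)
    {T R : Submodule ℝ V} (hT : ∀ x ∈ T, x ≠ 0 → 0 < B x x) (hR : ∀ x ∈ R, x ≠ 0 → 0 < B x x)
    (horth : ∀ x ∈ T, ∀ y ∈ R, B x y = 0) : ∀ x ∈ T ⊔ R, x ≠ 0 → 0 < B x x := by
  intro x hx h0
  obtain ⟨y, hy, z, hz, rfl⟩ := Submodule.mem_sup.1 hx
  have hexpand : B (y + z) (y + z) = B y y + B z z := by
    simp only [map_add, LinearMap.add_apply, hB z y, horth y hy z hz, add_zero, zero_add]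
  rcases eq_or_ne y 0 with rfl | hy0
  · simpa using hR z hz (by simpa using h0)
  rcases eq_or_ne z 0 with rfl | hz0
  · simpa using hT y hy hy0
  · exact hexpand ▸ add_pos (hT y hy hy0) (hR z hz hz0)

lemma posDef_map {B : V → V → ℝ} {B' : W → W → ℝ} {f : V →ₗ[ℝ] W}
    (hiso : ∀ x, B' (f x) (f x) = B x x) {T : Submodule ℝ V} (hT : ∀ x ∈ T, x ≠ 0 → 0 < B x x) :
    ∀ x ∈ T.map f, x ≠ 0 → 0 < B' x x := by
  rintro _ ⟨x, hx, rfl⟩ h0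
  exact hiso x ▸ hT x hx fun h => h0 (h ▸ map_zero f)

lemma finrank_map_of_disjoint_ker {T : Submodule ℝ V} {f : V →ₗ[ℝ] W}
    (h : Disjoint T (LinearMap.ker f)) : finrank ℝ (T.map f) = finrank ℝ T := by
  rw [← LinearMap.range_domRestrict,
    LinearMap.finrank_range_of_inj (LinearMap.injective_domRestrict_iff.2 h)]

lemma finrank_map_of_posDef {B : LinearMap.BilinForm ℝ V} {B' : LinearMap.BilinForm ℝ W}
    {f : V →ₗ[ℝ] W} (hiso : ∀ x, B' (f x) (f x) = B x x) {T : Submodule ℝ V}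
    (hT : ∀ x ∈ T, x ≠ 0 → 0 < B x x) : finrank ℝ (T.map f) = finrank ℝ T := by
  refine finrank_map_of_disjoint_ker (disjoint_of_pos_of_nonpos (B := (B · ·)) hT fun x hx _ => ?_)
  rw [← hiso, LinearMap.mem_ker.1 hx, map_zero]

/-- Nondegeneracy of `B` on `S`, expressed through the inertia indices: the dimensions of maximal
positive and negative definite subspaces of `S` add up to the dimension of `S`. -/
def NondegenerateOn (B : V → V → ℝ) (S : Submodule ℝ V) : Prop :=
  maxPosDim B S + maxNegDim B S = finrank ℝ S

lemma NondegenerateOn.neg {B : LinearMap.BilinForm ℝ V} {S : Submodule ℝ V}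
    (h : NondegenerateOn (B · ·) S) : NondegenerateOn ((-B) · ·) S := by
  rwa [NondegenerateOn, maxPosDim_neg, maxNegDim_neg, add_comm]

section FiniteDimensional

variable [FiniteDimensional ℝ V] [FiniteDimensional ℝ W]

lemma isGreatest_maxPosDim (B : V → V → ℝ) (S : Submodule ℝ V) :
    IsGreatest {m | ∃ T ≤ S, finrank ℝ T = m ∧ ∀ x ∈ T, x ≠ 0 → 0 < B x x} (maxPosDim B S) := by
  have hbdd : BddAbove {m | ∃ T ≤ S, finrank ℝ T = m ∧ ∀ x ∈ T, x ≠ 0 → 0 < B x x} := by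
    refine ⟨finrank ℝ S, ?_⟩
    rintro _ ⟨T, hTS, rfl, -⟩
    exact Submodule.finrank_mono hTS
  exact ⟨Nat.sSup_mem ⟨0, ⊥, bot_le, finrank_bot ℝ V, by simp⟩ hbdd, fun _ h => le_csSup hbdd h⟩

lemma finrank_add_le_of_disjoint {S T T' : Submodule ℝ V} (hT : T ≤ S) (hT' : T' ≤ S)
    (h : Disjoint T T') : finrank ℝ T + finrank ℝ T' ≤ finrank ℝ S := by
  rw [← Submodule.finrank_sup_add_finrank_inf_eq, h.eq_bot, finrank_bot, add_zero]
  exact Submodule.finrank_mono (sup_le hT hT')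

lemma maxPosDim_add_finrank_le {B : V → V → ℝ} {S T : Submodule ℝ V} (hT : T ≤ S)
    (hneg : ∀ x ∈ T, x ≠ 0 → B x x ≤ 0) : maxPosDim B S + finrank ℝ T ≤ finrank ℝ S := by
  obtain ⟨P, hPS, hP, hpos⟩ := (isGreatest_maxPosDim B S).1
  exact hP ▸ finrank_add_le_of_disjoint hPS hT (disjoint_of_pos_of_nonpos hpos hneg)

lemma exists_finrank_eq_maxNegDim (B : LinearMap.BilinForm ℝ V) (S : Submodule ℝ V) :
    ∃ T ≤ S, finrank ℝ T = maxNegDim (B · ·) S ∧ ∀ x ∈ T, x ≠ 0 → B x x < 0 := by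
  obtain ⟨T, hTS, hT, hpos⟩ := (isGreatest_maxPosDim ((-B) · ·) S).1
  exact ⟨T, hTS, hT.trans (maxPosDim_neg B S), fun x hx h0 => neg_pos.1 (hpos x hx h0)⟩

lemma maxPosDim_add_maxNegDim_le (B : LinearMap.BilinForm ℝ V) (S : Submodule ℝ V) :
    maxPosDim (B · ·) S + maxNegDim (B · ·) S ≤ finrank ℝ S := by
  obtain ⟨T, hTS, hT, hneg⟩ := exists_finrank_eq_maxNegDim B S
  exact hT ▸ maxPosDim_add_finrank_le hTS fun x hx h0 => (hneg x hx h0).le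

/- `B` is positive definite on `f T ⊔ R`, where `T ≤ S` is a maximal positive definite subspace. -/
lemma maxPosDim_add_finrank_le_maxPosDim {B : LinearMap.BilinForm ℝ V}
    {B' : LinearMap.BilinForm ℝ W} (hB' : ∀ x y, B' x y = B' y x) {S : Submodule ℝ V}
    {S' R : Submodule ℝ W} {f : V →ₗ[ℝ] W} (hf : S ≤ S'.comap f)
    (hiso : ∀ x, B' (f x) (f x) = B x x) (hRS : R ≤ S') (hR : ∀ x ∈ R, x ≠ 0 → 0 < B' x x)
    (horth : ∀ x ∈ S, ∀ y ∈ R, B' (f x) y = 0) :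
    maxPosDim (B · ·) S + finrank ℝ R ≤ maxPosDim (B' · ·) S' := by
  obtain ⟨T, hTS, hTdim, hT⟩ := (isGreatest_maxPosDim (B · ·) S).1
  have hfT := posDef_map (B' := (B' · ·)) hiso hT
  have hfT_orth : ∀ x ∈ T.map f, ∀ y ∈ R, B' x y = 0 := by
    rintro _ ⟨x, hx, rfl⟩ y hy
    exact horth x (hTS hx) y hy
  have hdisj : Disjoint (T.map f) R := Submodule.disjoint_def.2 fun x hx hxR =>
    by_contra fun h0 => (hfT x hx h0).ne' (hfT_orth x hx x hxR)
  have hdim : finrank ℝ (T.map f ⊔ R : Submodule ℝ W) = maxPosDim (B · ·) S + finrank ℝ R := by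
    rw [← hTdim, ← finrank_map_of_posDef hiso hT, ← add_zero (finrank ℝ _),
      ← finrank_bot ℝ W, ← hdisj.eq_bot, Submodule.finrank_sup_add_finrank_inf_eq]
  exact hdim ▸ (isGreatest_maxPosDim (B' · ·) S').2
    ⟨_, sup_le (Submodule.map_le_iff_le_comap.2 (hTS.trans hf)) hRS, rfl,
      pos_of_mem_sup hB' hfT hR hfT_orth⟩

lemma maxPosDim_le_of_isometry {B : LinearMap.BilinForm ℝ V} {B' : LinearMap.BilinForm ℝ W}
    (hB' : ∀ x y, B' x y = B' y x) {S : Submodule ℝ V} {S' : Submodule ℝ W} {f : V →ₗ[ℝ] W}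
    (hf : S ≤ S'.comap f) (hiso : ∀ x, B' (f x) (f x) = B x x) :
    maxPosDim (B · ·) S ≤ maxPosDim (B' · ·) S' := by
  simpa using maxPosDim_add_finrank_le_maxPosDim (R := ⊥) hB' hf hiso bot_le (by simp) (by simp)

lemma maxNegDim_le_of_isometry {B : LinearMap.BilinForm ℝ V} {B' : LinearMap.BilinForm ℝ W}
    (hB' : ∀ x y, B' x y = B' y x) {S : Submodule ℝ V} {S' : Submodule ℝ W} {f : V →ₗ[ℝ] W}
    (hf : S ≤ S'.comap f) (hiso : ∀ x, B' (f x) (f x) = B x x) :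
    maxNegDim (B · ·) S ≤ maxNegDim (B' · ·) S' := by
  rw [← maxPosDim_neg, ← maxPosDim_neg]
  exact maxPosDim_le_of_isometry (fun x y => congrArg _ (hB' x y)) hf fun x => congrArg _ (hiso x)

/- Otherwise `B` would be negative semidefinite on `T ⊔ span {u}`, which is too large for that. -/
lemma pos_of_orthogonal_maximal {B : LinearMap.BilinForm ℝ V} (hB : ∀ x y, B x y = B y x)
    {S T : Submodule ℝ V} (hTS : T ≤ S) (hT : ∀ x ∈ T, x ≠ 0 → B x x < 0)
    (hdim : finrank ℝ S ≤ maxPosDim (B · ·) S + finrank ℝ T) {u : V} (hu : u ∈ S)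
    (horth : ∀ x ∈ T, B x u = 0) (h0 : u ≠ 0) : 0 < B u u := by
  by_contra! hle
  have hnonpos : ∀ x ∈ T ⊔ ℝ ∙ u, x ≠ 0 → B x x ≤ 0 := by
    intro x hx _
    obtain ⟨y, hy, z, hz, rfl⟩ := Submodule.mem_sup.1 hx
    obtain ⟨c, rfl⟩ := Submodule.mem_span_singleton.1 hz
    have hyy : B y y ≤ 0 := by
      rcases eq_or_ne y 0 with rfl | hy0
      · simp
      · exact (hT y hy hy0).le
    simp only [map_add, map_smul, LinearMap.add_apply, LinearMap.smul_apply, smul_eq_mul,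
      horth y hy, hB u y]
    nlinarith [mul_nonneg_of_nonpos_of_nonpos hle (neg_nonpos.2 (mul_self_nonneg c))]
  have hdisj : Disjoint T (ℝ ∙ u) := by
    refine Submodule.disjoint_def.2 fun x hx hxu => by_contra fun hx0 => (hT x hx hx0).ne ?_
    obtain ⟨c, rfl⟩ := Submodule.mem_span_singleton.1 hxu
    rw [map_smul, horth _ hx, smul_zero]
  have hsup := Submodule.finrank_sup_add_finrank_inf_eq T (ℝ ∙ u)
  rw [hdisj.eq_bot, finrank_bot, finrank_span_singleton h0] at hsup
  have hmax := maxPosDim_add_finrank_le (B := (B · ·))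
    (sup_le hTS ((Submodule.span_singleton_le_iff_mem u S).2 hu)) hnonpos
  omega

lemma maxPosDim_add_maxNegDim_bot (B : LinearMap.BilinForm ℝ V) :
    maxPosDim (B · ·) ⊥ + maxNegDim (B · ·) ⊥ = 0 :=
  Nat.le_zero.1 (finrank_bot ℝ V ▸ maxPosDim_add_maxNegDim_le B ⊥)

lemma nondegenerateOn_bot (B : LinearMap.BilinForm ℝ V) : NondegenerateOn (B · ·) ⊥ := by
  rw [NondegenerateOn, finrank_bot, maxPosDim_add_maxNegDim_bot]

lemma signature_bot (B : LinearMap.BilinForm ℝ V) : signature (B · ·) ⊥ = 0 := by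
  have := maxPosDim_add_maxNegDim_bot B
  rw [signature]
  omega

section Step

variable {B : LinearMap.BilinForm ℝ V} {B' : LinearMap.BilinForm ℝ W} {S : Submodule ℝ V}
  {S' : Submodule ℝ W} {f : V →ₗ[ℝ] W}

lemma maxNegDim_eq_of_posDef_complement (hB' : ∀ x y, B' x y = B' y x) (hf : S ≤ S'.comap f)
    (hiso : ∀ x, B' (f x) (f x) = B x x) (hS : NondegenerateOn (B · ·) S)
    {R : Submodule ℝ W} (hRS : R ≤ S') (hR : ∀ x ∈ R, x ≠ 0 → 0 < B' x x)
    (horth : ∀ x ∈ S, ∀ y ∈ R, B' (f x) y = 0)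
    (hdim : finrank ℝ S' ≤ finrank ℝ S + finrank ℝ R) :
    NondegenerateOn (B' · ·) S' ∧ maxNegDim (B' · ·) S' = maxNegDim (B · ·) S := by
  have hpos := maxPosDim_add_finrank_le_maxPosDim hB' hf hiso hRS hR horth
  have hneg := maxNegDim_le_of_isometry hB' hf hiso
  have hle := maxPosDim_add_maxNegDim_le B' S'
  simp only [NondegenerateOn] at *
  omega

lemma posDef_complement_of_signature_sub (hB' : ∀ x y, B' x y = B' y x) (hf : S ≤ S'.comap f)
    (hiso : ∀ x, B' (f x) (f x) = B x x) (hS : NondegenerateOn (B · ·) S)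
    (hsig : signature (B' · ·) S' - signature (B · ·) S = finrank ℝ S' - finrank ℝ S) :
    NondegenerateOn (B' · ·) S' ∧
      ∀ u ∈ S', (∀ x ∈ S, B' (f x) u = 0) → u ≠ 0 → 0 < B' u u := by
  have hneg := maxNegDim_le_of_isometry hB' hf hiso
  have hle := maxPosDim_add_maxNegDim_le B' S'
  simp only [NondegenerateOn, signature] at *
  refine ⟨by omega, fun u hu horth h0 => ?_⟩
  obtain ⟨T, hTS, hT, hTneg⟩ := exists_finrank_eq_maxNegDim B S
  have hiso_neg : ∀ x, (-B') (f x) (f x) = (-B) x x := fun x => congrArg _ (hiso x)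
  have hTneg' : ∀ x ∈ T, x ≠ 0 → 0 < (-B) x x := fun x hx hx0 => neg_pos.2 (hTneg x hx hx0)
  refine pos_of_orthogonal_maximal hB' (Submodule.map_le_iff_le_comap.2 (hTS.trans hf))
    (fun x hx hx0 => neg_pos.1 (posDef_map (B' := ((-B') · ·)) hiso_neg hTneg' x hx hx0))
    ?_ hu ?_ h0
  · rw [finrank_map_of_posDef hiso_neg hTneg']
    omega
  · rintro _ ⟨x, hx, rfl⟩
    exact horth x (hTS hx)

lemma signature_of_definite_complement (K : ℕ) (hB' : ∀ x y, B' x y = B' y x)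
    (hf : S ≤ S'.comap f) (hiso : ∀ x, B' (f x) (f x) = B x x)
    (hS : NondegenerateOn (B · ·) S)
    {R : Submodule ℝ W} (hRS : R ≤ S') (hR : ∀ x ∈ R, x ≠ 0 → 0 < (-1 : ℝ) ^ K * B' x x)
    (horth : ∀ x ∈ S, ∀ y ∈ R, B' (f x) y = 0)
    (hdim : finrank ℝ S' ≤ finrank ℝ S + finrank ℝ R) :
    NondegenerateOn (B' · ·) S' ∧
      signature (B' · ·) S' =
        signature (B · ·) S + (-1) ^ K * ((finrank ℝ S' : ℤ) - finrank ℝ S) := by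
  rcases Nat.even_or_odd K with hK | hK
  · simp only [hK.neg_one_pow, one_mul] at hR ⊢
    obtain ⟨hnd, hneg⟩ := maxNegDim_eq_of_posDef_complement hB' hf hiso hS hRS hR horth hdim
    refine ⟨hnd, ?_⟩
    simp only [NondegenerateOn, signature] at *
    omega
  · simp only [hK.neg_one_pow, neg_mul, one_mul] at hR ⊢
    obtain ⟨hnd, hpos⟩ := maxNegDim_eq_of_posDef_complement (B := -B) (B' := -B')
      (by simpa using hB') hf (by simpa using hiso) hS.neg hRS (by simpa using hR)
      (by simpa using horth) hdim
    refine ⟨by simpa using hnd.neg, ?_⟩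
    simp only [NondegenerateOn, signature, maxPosDim_neg, maxNegDim_neg] at *
    omega

lemma definite_complement_of_signature (K : ℕ) (hB' : ∀ x y, B' x y = B' y x)
    (hf : S ≤ S'.comap f) (hiso : ∀ x, B' (f x) (f x) = B x x)
    (hS : NondegenerateOn (B · ·) S)
    (hsig : signature (B' · ·) S' =
      signature (B · ·) S + (-1) ^ K * ((finrank ℝ S' : ℤ) - finrank ℝ S)) :
    NondegenerateOn (B' · ·) S' ∧
      ∀ u ∈ S', (∀ x ∈ S, B' (f x) u = 0) → u ≠ 0 → 0 < (-1 : ℝ) ^ K * B' u u := by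
  rcases Nat.even_or_odd K with hK | hK
  · simp only [hK.neg_one_pow, one_mul] at hsig ⊢
    exact posDef_complement_of_signature_sub hB' hf hiso hS (by omega)
  · simp only [hK.neg_one_pow, neg_mul, one_mul] at hsig ⊢
    obtain ⟨hnd, hu⟩ := posDef_complement_of_signature_sub (B := -B) (B' := -B')
      (by simpa using hB') hf (by simpa using hiso) hS.neg (by simp only [signature_neg]; omega)
    exact ⟨by simpa using hnd.neg, by simpa using hu⟩

end Step
end FiniteDimensional
end Signature

section Polarization

variable {V : Type} [AddCommGroup V] [Module ℝ V] {d : ℕ} {A : ℤ → Submodule ℝ V}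
  {Φ : LinearMap.BilinForm ℝ V} {L : V →ₗ[ℝ] V}

/-- The positivity part of the Hodge–Riemann relations for a graded space `A` with a symmetric form
`Φ` and a `Φ`-self-adjoint operator `L` of degree one: `(-1)^k Φ(u, L^n u) > 0` for every nonzero
primitive `u` of degree `k`, where `2 * k + n = d`. -/
structure IsPolarized (d : ℕ) (A : ℤ → Submodule ℝ V) (Φ : LinearMap.BilinForm ℝ V)
    (L : V →ₗ[ℝ] V) : Prop where
  map_mem : ∀ k, ∀ x ∈ A k, L x ∈ A (k + 1)
  symm : ∀ x y, Φ x y = Φ y x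
  adj : ∀ x y, Φ (L x) y = Φ x (L y)
  pos : ∀ (k : ℤ) (n : ℕ), 2 * k + n = d → ∀ u ∈ A k, (L ^ (n + 1)) u = 0 → u ≠ 0 →
    0 < (-1 : ℝ) ^ k * Φ u ((L ^ n) u)

lemma apply_pow_left_eq (hadj : ∀ x y, Φ (L x) y = Φ x (L y)) (n : ℕ) (x y : V) :
    Φ ((L ^ n) x) y = Φ x ((L ^ n) y) := by
  induction n generalizing y with
  | zero => rfl
  | succ n ih =>
    rw [pow_succ', Module.End.mul_apply, hadj, ih, ← Module.End.mul_apply, ← pow_succ, pow_succ']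

lemma pow_apply_mem (hL : ∀ k, ∀ x ∈ A k, L x ∈ A (k + 1)) (n : ℕ) {k : ℤ} {x : V}
    (hx : x ∈ A k) : (L ^ n) x ∈ A (k + n) := by
  induction n with
  | zero => simpa using hx
  | succ n ih =>
    rw [pow_succ', Module.End.mul_apply, Nat.cast_succ, ← add_assoc]
    exact hL _ _ ih

lemma compl₂_pow_symm (hsymm : ∀ x y, Φ x y = Φ y x) (hadj : ∀ x y, Φ (L x) y = Φ x (L y))
    (n : ℕ) (x y : V) : Φ.compl₂ (L ^ n) x y = Φ.compl₂ (L ^ n) y x := by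
  simp only [LinearMap.compl₂_apply, hsymm x, apply_pow_left_eq hadj]

lemma compl₂_pow_map_map (hadj : ∀ x y, Φ (L x) y = Φ x (L y)) (n : ℕ) (x y : V) :
    Φ.compl₂ (L ^ n) (L x) (L y) = Φ.compl₂ (L ^ (n + 2)) x y := by
  simp only [LinearMap.compl₂_apply, hadj, ← Module.End.mul_apply, ← pow_succ, ← pow_succ']

lemma compl₂_pow_map_primitive (hadj : ∀ x y, Φ (L x) y = Φ x (L y)) {n : ℕ} {u : V}
    (hu : (L ^ (n + 1)) u = 0) (x : V) : Φ.compl₂ (L ^ n) (L x) u = 0 := by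
  rw [LinearMap.compl₂_apply, hadj, ← Module.End.mul_apply, ← pow_succ', hu, map_zero]

lemma Q_eq_compl₂_pow {k n : ℕ} (h : 2 * k + n = d) : Q Φ L d k = (Φ.compl₂ (L ^ n) · ·) := by
  funext x y
  rw [Q, LinearMap.compl₂_apply, ← h, Nat.add_sub_cancel_left]

lemma map_mem_level (hL : ∀ k, ∀ x ∈ A k, L x ∈ A (k + 1)) (k : ℤ) :
    A (k - 1) ≤ (A k).comap L := fun x hx => by
  simpa using hL _ x hx

lemma IsPolarized.eq_zero_of_pow_apply_eq_zero (h : IsPolarized d A Φ L) {k : ℤ} {n : ℕ}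
    (hkn : 2 * k + n = d) {x : V} (hx : x ∈ A k) (hLx : (L ^ n) x = 0) : x = 0 := by
  by_contra h0
  have := h.pos k n hkn x hx (by rw [pow_succ', Module.End.mul_apply, hLx, map_zero]) h0
  simp [hLx] at this

section FiniteDimensional

variable [FiniteDimensional ℝ V]

/- Level `K` is the degree `K - 1`, so that the inductions start in the degree `-1`. -/
lemma HR.signature_eq (h : HR d A Φ L) (hneg : A (-1) = ⊥) {K n : ℕ} (hn : n + 2 * K = d + 2) :
    signature (Φ.compl₂ (L ^ n) · ·) (A (K - 1)) =
      ∑ i ∈ Finset.range K, (-1) ^ i * ((finrank ℝ (A i) : ℤ) - finrank ℝ (A (i - 1))) := by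
  cases K with
  | zero => rw [Nat.cast_zero, zero_sub, hneg, signature_bot, Finset.sum_range_zero]
  | succ k =>
    rw [Nat.cast_succ, add_sub_cancel_right, ← h.2 k (by omega),
      Q_eq_compl₂_pow (n := n) (by omega)]

lemma HR.definite_primitive (h : HR d A Φ L) (hneg : A (-1) = ⊥)
    (hL : ∀ k, ∀ x ∈ A k, L x ∈ A (k + 1)) (hsymm : ∀ x y, Φ x y = Φ y x)
    (hadj : ∀ x y, Φ (L x) y = Φ x (L y)) {K n : ℕ} (hn : 2 * K + n = d)
    (hK : NondegenerateOn (Φ.compl₂ (L ^ (n + 2)) · ·) (A (K - 1))) :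
    NondegenerateOn (Φ.compl₂ (L ^ n) · ·) (A K) ∧ ∀ u ∈ A K, (L ^ (n + 1)) u = 0 → u ≠ 0 →
      0 < (-1 : ℝ) ^ K * Φ u ((L ^ n) u) := by
  have hsig := h.signature_eq hneg (K := K + 1) (n := n) (by omega)
  rw [Finset.sum_range_succ, ← h.signature_eq hneg (by omega : n + 2 + 2 * K = d + 2),
    Nat.cast_succ, add_sub_cancel_right] at hsig
  obtain ⟨hnd, hpos⟩ := definite_complement_of_signature K (compl₂_pow_symm hsymm hadj n)
    (map_mem_level hL K) (fun x => compl₂_pow_map_map hadj n x x) hK hsig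
  exact ⟨hnd, fun u hu hprim => hpos u hu fun x _ => compl₂_pow_map_primitive hadj hprim x⟩

lemma HR.nondegenerateOn (h : HR d A Φ L) (hneg : A (-1) = ⊥)
    (hL : ∀ k, ∀ x ∈ A k, L x ∈ A (k + 1)) (hsymm : ∀ x y, Φ x y = Φ y x)
    (hadj : ∀ x y, Φ (L x) y = Φ x (L y)) {K n : ℕ} (hn : n + 2 * K = d + 2) :
    NondegenerateOn (Φ.compl₂ (L ^ n) · ·) (A (K - 1)) := by
  induction K generalizing n with
  | zero => rw [Nat.cast_zero, zero_sub, hneg]; exact nondegenerateOn_bot _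
  | succ K ih =>
    rw [Nat.cast_succ, add_sub_cancel_right]
    exact (h.definite_primitive hneg hL hsymm hadj (by omega) (ih (by omega))).1

lemma HR.isPolarized (h : HR d A Φ L) (hneg : ∀ k < 0, A k = ⊥)
    (hL : ∀ k, ∀ x ∈ A k, L x ∈ A (k + 1)) (hsymm : ∀ x y, Φ x y = Φ y x)
    (hadj : ∀ x y, Φ (L x) y = Φ x (L y)) : IsPolarized d A Φ L where
  map_mem := hL
  symm := hsymm
  adj := hadj
  pos k n hkn u hu hprim h0 := by
    rcases lt_or_ge k 0 with hk | hk
    · exact absurd ((Submodule.mem_bot ℝ).1 (hneg k hk ▸ hu)) h0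
    lift k to ℕ using hk
    rw [zpow_natCast]
    have hneg' := hneg (-1) (by norm_num)
    exact (h.definite_primitive hneg' hL hsymm hadj (by omega)
      (h.nondegenerateOn hneg' hL hsymm hadj (by omega))).2 u hu hprim h0

namespace IsPolarized

lemma map_pow_eq (h : IsPolarized d A Φ L) (hA : WPD d A) {k : ℤ} {n : ℕ} (hkn : 2 * k + n = d) :
    (A k).map (L ^ n) = A (k + n) := by
  refine Submodule.eq_of_le_of_finrank_eq
    (Submodule.map_le_iff_le_comap.2 fun x => pow_apply_mem h.map_mem n) ?_
  rw [finrank_map_of_disjoint_ker, hA k, show (d : ℤ) - k = k + n by omega]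
  exact Submodule.disjoint_def.2 fun x hx => h.eq_zero_of_pow_apply_eq_zero hkn hx

lemma finrank_le_add_primitive (h : IsPolarized d A Φ L) (hA : WPD d A) {k : ℤ} {n : ℕ}
    (hkn : 2 * k + n = d) : finrank ℝ (A k) ≤
      finrank ℝ (A (k - 1)) + finrank ℝ (A k ⊓ LinearMap.ker (L ^ (n + 1)) : Submodule ℝ V) := by
  have hmap : (A k).map (L ^ (n + 1)) ≤ A (d - (k - 1)) := by
    refine Submodule.map_le_iff_le_comap.2 fun x hx => ?_
    rw [Submodule.mem_comap, show (d : ℤ) - (k - 1) = k + (n + 1 : ℕ) by push_cast; omega]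
    exact pow_apply_mem h.map_mem _ hx
  have hrank := LinearMap.finrank_range_add_finrank_ker ((L ^ (n + 1)).domRestrict (A k))
  rw [LinearMap.range_domRestrict, LinearMap.ker_domRestrict] at hrank
  rw [← hrank, hA (k - 1), ← Submodule.finrank_map_subtype_eq, Submodule.map_comap_subtype]
  exact Nat.add_le_add_right (Submodule.finrank_mono hmap) _

lemma nondegenerateOn_and_signature_eq (h : IsPolarized d A Φ L) (hA : WPD d A)
    (hneg : A (-1) = ⊥) {K n : ℕ} (hn : n + 2 * K = d + 2) :
    NondegenerateOn (Φ.compl₂ (L ^ n) · ·) (A (K - 1)) ∧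
      signature (Φ.compl₂ (L ^ n) · ·) (A (K - 1)) =
        ∑ i ∈ Finset.range K, (-1) ^ i * ((finrank ℝ (A i) : ℤ) - finrank ℝ (A (i - 1))) := by
  induction K generalizing n with
  | zero =>
    rw [Nat.cast_zero, zero_sub, hneg]
    exact ⟨nondegenerateOn_bot _, signature_bot _⟩
  | succ K ih =>
    rw [Nat.cast_succ, add_sub_cancel_right, Finset.sum_range_succ]
    obtain ⟨hnd, hsig⟩ := ih (n := n + 2) (by omega)
    rw [← hsig]
    refine signature_of_definite_complement K (compl₂_pow_symm h.symm h.adj n)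
      (map_mem_level h.map_mem K) (fun x => compl₂_pow_map_map h.adj n x x) hnd
      (R := A K ⊓ LinearMap.ker (L ^ (n + 1))) inf_le_left ?_ ?_
      (h.finrank_le_add_primitive hA (by omega))
    · intro u hu h0
      exact zpow_natCast (-1 : ℝ) K ▸ h.pos K n (by omega) u hu.1 hu.2 h0
    · intro x _ u hu
      exact compl₂_pow_map_primitive h.adj hu.2 x

lemma hr (h : IsPolarized d A Φ L) (hA : WPD d A) (hneg : A (-1) = ⊥) : HR d A Φ L := by
  refine ⟨hA, fun k hk => ?_⟩
  have := (h.nondegenerateOn_and_signature_eq hA hneg (K := k + 1) (n := d - 2 * k) (by omega)).2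
  rwa [Nat.cast_succ, add_sub_cancel_right, ← Q_eq_compl₂_pow (Nat.add_sub_of_le hk)] at this

end IsPolarized
end FiniteDimensional
end Polarization

section OrthogonalSum

variable {V W : Type} [AddCommGroup V] [Module ℝ V] [AddCommGroup W] [Module ℝ W] {d : ℕ}
  {A : ℤ → Submodule ℝ V} {Φ : LinearMap.BilinForm ℝ V} {L : V →ₗ[ℝ] V}

lemma map_pow_apply {f : V →ₗ[ℝ] W} {M : W →ₗ[ℝ] W} (h : ∀ x, f (L x) = M (f x)) (n : ℕ) (x : V) :
    f ((L ^ n) x) = (M ^ n) (f x) := by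
  induction n with
  | zero => rfl
  | succ n ih => rw [pow_succ', Module.End.mul_apply, h, ih, ← Module.End.mul_apply, ← pow_succ']

namespace IsPolarized

/- A primitive vector of a shifted summand is still primitive, and shifting by `s` changes the sign
in the Hodge–Riemann relations by `(-1)^s`. -/
lemma of_orthogonal_family {ι : Type*} [Fintype ι] {W : ι → Type} [∀ c, AddCommGroup (W c)]
    [∀ c, Module ℝ (W c)] {δ : ι → ℕ} {G : ∀ c, ℤ → Submodule ℝ (W c)}
    {Ψ : ∀ c, LinearMap.BilinForm ℝ (W c)} {M : ∀ c, W c →ₗ[ℝ] W c}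
    (hW : ∀ c, IsPolarized (δ c) (G c) (Ψ c) (M c)) {s : ι → ℤ} {ε : ι → ℝ}
    (hd : ∀ c, δ c + 2 * s c = d) (hε : ∀ c, 0 < (-1 : ℝ) ^ s c * ε c) (f : ∀ c, V →ₗ[ℝ] W c)
    (hinj : ∀ x, (∀ c, f c x = 0) → x = 0) (hA : ∀ k x, x ∈ A k ↔ ∀ c, f c x ∈ G c (k - s c))
    (hL : ∀ c x, f c (L x) = M c (f c x)) (hΦ : ∀ x y, Φ x y = ∑ c, ε c * Ψ c (f c x) (f c y)) :
    IsPolarized d A Φ L where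
  map_mem k x hx := (hA _ _).2 fun c => by
    rw [hL, add_sub_right_comm]
    exact (hW c).map_mem _ _ ((hA k x).1 hx c)
  symm x y := by simp only [hΦ, (hW _).symm (f _ x)]
  adj x y := by simp only [hΦ, hL, (hW _).adj]
  pos k n hkn u hu hprim h0 := by
    have hcomp : ∀ c, f c u ≠ 0 →
        0 < (-1 : ℝ) ^ k * (ε c * Ψ c (f c u) (f c ((L ^ n) u))) := by
      intro c hc
      have hpos := (hW c).pos (k - s c) n (by linarith [hd c]) (f c u) ((hA k u).1 hu c)
        (by rw [← map_pow_apply (hL c), hprim, map_zero]) hc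
      rw [map_pow_apply (hL c), show k = s c + (k - s c) by ring, zpow_add₀ (by norm_num)]
      exact mul_mul_mul_comm ((-1 : ℝ) ^ s c) _ _ _ ▸ mul_pos (hε c) hpos
    obtain ⟨c, hc⟩ := not_forall.1 (mt (hinj u) h0)
    rw [hΦ, Finset.mul_sum]
    refine Finset.sum_pos' (fun c _ => ?_) ⟨c, Finset.mem_univ c, hcomp c hc⟩
    by_cases hc : f c u = 0
    · simp [hc]
    · exact (hcomp c hc).le

lemma of_injective {G : ℤ → Submodule ℝ W} {Ψ : LinearMap.BilinForm ℝ W} {M : W →ₗ[ℝ] W}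
    (hW : IsPolarized d G Ψ M) {f : V →ₗ[ℝ] W} (hinj : Function.Injective f)
    (hA : ∀ k x, x ∈ A k ↔ f x ∈ G k) (hL : ∀ x, f (L x) = M (f x)) {r : ℝ} (hr : 0 < r)
    (hΦ : ∀ x y, Φ x y = r * Ψ (f x) (f y)) : IsPolarized d A Φ L :=
  of_orthogonal_family (ι := Unit) (s := 0) (ε := fun _ => r) (fun _ => hW) (by simp) (by simpa)
    (fun _ => f) (fun x hx => (map_eq_zero_iff f hinj).1 (hx ())) (by simpa using hA)
    (fun _ => hL) (by simpa using hΦ)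

end IsPolarized
end OrthogonalSum

section Doubling

variable {V : Type} [AddCommGroup V] [Module ℝ V] {d : ℕ} {A : ℤ → Submodule ℝ V}
  {Φ : LinearMap.BilinForm ℝ V} {L : V →ₗ[ℝ] V}

/-- The grading of `A ⊗ ℝ[x]/(x²)` with `x` of degree one, where `(a, b)` stands for
`a ⊗ 1 + b ⊗ x`. -/
def doubleGrading (A : ℤ → Submodule ℝ V) (k : ℤ) : Submodule ℝ (V × V) :=
  (A k).prod (A (k - 1))

/-- The operator `L ⊗ 1 + 1 ⊗ x` on `A ⊗ ℝ[x]/(x²)`. -/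
def doubleOp (L : V →ₗ[ℝ] V) : V × V →ₗ[ℝ] V × V :=
  (L ∘ₗ LinearMap.fst ℝ V V).prod (LinearMap.fst ℝ V V + L ∘ₗ LinearMap.snd ℝ V V)

/-- The tensor product of `Φ` with the form `(p, q) ↦ [x] p q` on `ℝ[x]/(x²)`. -/
def doubleForm (Φ : LinearMap.BilinForm ℝ V) : LinearMap.BilinForm ℝ (V × V) :=
  Φ.compl₁₂ (LinearMap.fst ℝ V V) (LinearMap.snd ℝ V V) +
    Φ.compl₁₂ (LinearMap.snd ℝ V V) (LinearMap.fst ℝ V V)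

lemma doubleOp_apply (a b : V) : doubleOp L (a, b) = (L a, a + L b) := rfl

lemma doubleForm_apply (x y : V × V) : doubleForm Φ x y = Φ x.1 y.2 + Φ x.2 y.1 := rfl

lemma doubleOp_pow_apply (n : ℕ) (a b : V) :
    (doubleOp L ^ n) (a, b) = ((L ^ n) a, (n : ℝ) • (L ^ (n - 1)) a + (L ^ n) b) := by
  induction n with
  | zero => simp
  | succ n ih =>
    have hstep : (n : ℝ) • L ((L ^ (n - 1)) a) = (n : ℝ) • (L ^ n) a := by
      cases n with
      | zero => simp
      | succ n => rw [Nat.add_sub_cancel, pow_succ' L, Module.End.mul_apply]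
    rw [pow_succ', Module.End.mul_apply, ih, doubleOp_apply, map_add, map_smul, hstep,
      Nat.add_sub_cancel, pow_succ' L, Module.End.mul_apply, Module.End.mul_apply]
    congr 1
    push_cast
    module

lemma doubleForm_pow_apply (hadj : ∀ x y, Φ (L x) y = Φ x (L y)) {n : ℕ} {a₀ : V}
    (ha₀ : (L ^ n) a₀ = 0) (a₁ : V) :
    let u : V × V := (a₀ + L a₁, -(n + 1 : ℝ) • a₁)
    doubleForm Φ u ((doubleOp L ^ n) u) =
      n * Φ a₀ ((L ^ (n - 1)) a₀) - (n + 2) * Φ a₁ ((L ^ (n + 1)) a₁) := by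
  have hcross : Φ a₀ ((L ^ n) a₁) = 0 := by rw [← apply_pow_left_eq hadj, ha₀]; simp
  simp only [doubleOp_pow_apply, doubleForm_apply, map_add, map_smul, LinearMap.add_apply,
    LinearMap.smul_apply, smul_eq_mul, ha₀, hadj a₁, hcross, ← Module.End.mul_apply, ← pow_succ,
    ← pow_succ']
  cases n with
  | zero => simp; ring
  | succ n =>
    simp only [Nat.add_sub_cancel, ha₀, hcross, map_zero]
    push_cast
    ring

namespace IsPolarized

lemma exists_of_double_primitive [FiniteDimensional ℝ V] (h : IsPolarized d A Φ L) (hA : WPD d A)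
    {k : ℤ} {n : ℕ} (hkn : 2 * k + n = (d + 1 : ℕ)) {u : V × V} (hu : u ∈ doubleGrading A k)
    (hprim : (doubleOp L ^ (n + 1)) u = 0) :
    ∃ a₀ ∈ A k, ∃ a₁ ∈ A (k - 1), (L ^ n) a₀ = 0 ∧ (L ^ (n + 2)) a₁ = 0 ∧
      u = (a₀ + L a₁, -(n + 1 : ℝ) • a₁) := by
  obtain ⟨a, b⟩ := u
  obtain ⟨ha, hb⟩ : a ∈ A k ∧ b ∈ A (k - 1) := hu
  obtain ⟨hprim_a, hprim_b⟩ : (L ^ (n + 1)) a = 0 ∧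
      ((n + 1 : ℕ) : ℝ) • (L ^ n) a + (L ^ (n + 1)) b = 0 := by
    simpa only [doubleOp_pow_apply, Prod.mk_eq_zero, Nat.add_sub_cancel] using hprim
  have hkn' : 2 * (k - 1) + (n + 1 : ℕ) = (d : ℤ) := by push_cast at hkn ⊢; linarith
  obtain ⟨a₁, ha₁, hLa₁⟩ : (L ^ n) a ∈ (A (k - 1)).map (L ^ (n + 1)) := by
    rw [h.map_pow_eq hA hkn', show k - 1 + (n + 1 : ℕ) = k + n by push_cast; ring]
    exact pow_apply_mem h.map_mem n ha
  refine ⟨a - L a₁, sub_mem ha (map_mem_level h.map_mem k ha₁), a₁, ha₁, ?_, ?_, ?_⟩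
  · rw [map_sub, ← Module.End.mul_apply, ← pow_succ, hLa₁, sub_self]
  · rw [pow_succ', Module.End.mul_apply, hLa₁, ← Module.End.mul_apply, ← pow_succ', hprim_a]
  · have hb_add : b + (n + 1 : ℝ) • a₁ = 0 := by
      refine h.eq_zero_of_pow_apply_eq_zero hkn' (add_mem hb (Submodule.smul_mem _ _ ha₁)) ?_
      rw [map_add, map_smul, hLa₁, add_comm]
      exact_mod_cast hprim_b
    rw [sub_add_cancel, neg_smul, ← eq_neg_of_add_eq_zero_left hb_add]

lemma double [FiniteDimensional ℝ V] (h : IsPolarized d A Φ L) (hA : WPD d A) :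
    IsPolarized (d + 1) (doubleGrading A) (doubleForm Φ) (doubleOp L) where
  map_mem k := by
    rintro ⟨a, b⟩ ⟨ha, hb⟩
    exact ⟨h.map_mem k a ha, add_mem (by simpa using ha)
      (by simpa [add_sub_right_comm] using h.map_mem (k - 1) b hb)⟩
  symm x y := by rw [doubleForm_apply, doubleForm_apply, h.symm x.1, h.symm x.2, add_comm]
  adj := by
    rintro ⟨a, b⟩ ⟨a', b'⟩
    simp only [doubleForm_apply, doubleOp_apply, map_add, LinearMap.add_apply, h.adj]
    ring
  pos k n hkn u hu hprim h0 := by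
    obtain ⟨a₀, ha₀, a₁, ha₁, hprim₀, hprim₁, rfl⟩ := h.exists_of_double_primitive hA hkn hu hprim
    rw [doubleForm_pow_apply h.adj hprim₀]
    have hpos₁ : a₁ ≠ 0 → 0 < (-1 : ℝ) ^ (k - 1) * Φ a₁ ((L ^ (n + 1)) a₁) :=
      h.pos (k - 1) (n + 1) (by push_cast at hkn ⊢; linarith) a₁ ha₁ hprim₁
    have hpos₀ : a₀ ≠ 0 → 0 < (-1 : ℝ) ^ k * (n * Φ a₀ ((L ^ (n - 1)) a₀)) := by
      intro ha
      obtain _ | n := n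
      · exact absurd hprim₀ ha
      rw [mul_left_comm]
      exact mul_pos (by positivity) (h.pos k n (by push_cast at hkn; linarith) a₀ ha₀ hprim₀ ha)
    have hsign : (-1 : ℝ) ^ k = -(-1) ^ (k - 1) := by
      rw [zpow_sub_one₀ (by norm_num)]; ring
    have hexpand : (-1 : ℝ) ^ k *
        (n * Φ a₀ ((L ^ (n - 1)) a₀) - (n + 2) * Φ a₁ ((L ^ (n + 1)) a₁)) =
          (-1) ^ k * (n * Φ a₀ ((L ^ (n - 1)) a₀)) +
            (n + 2) * ((-1) ^ (k - 1) * Φ a₁ ((L ^ (n + 1)) a₁)) := by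
      rw [mul_sub, sub_eq_add_neg]; congr 1; rw [hsign]; ring
    rw [hexpand]
    rcases eq_or_ne a₁ 0 with rfl | h₁
    · simpa using hpos₀ fun ha => h0 (by simp [ha])
    refine add_pos_of_nonneg_of_pos ?_ (mul_pos (by positivity) (hpos₁ h₁))
    rcases eq_or_ne a₀ 0 with rfl | h₀
    · simp
    · exact (hpos₀ h₀).le

end IsPolarized
end Doubling

section StringModel

variable {V : Type} [AddCommGroup V] [Module ℝ V] {d : ℕ} {A : ℤ → Submodule ℝ V}
  {Φ : LinearMap.BilinForm ℝ V} {L : V →ₗ[ℝ] V}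

/-- The grading of `A ⊗ E`, where `E` has a basis indexed by `κ` whose `i`-th vector has degree
`deg i`, and tensors are given by their coordinates. -/
def piGrading {κ : Type*} (A : ℤ → Submodule ℝ V) (deg : κ → ℤ) (k : ℤ) : Submodule ℝ (κ → V) :=
  Submodule.pi Set.univ fun i => A (k - deg i)

lemma mem_piGrading {κ : Type*} {deg : κ → ℤ} {k : ℤ} {x : κ → V} :
    x ∈ piGrading A deg k ↔ ∀ i, x i ∈ A (k - deg i) := by
  simp [piGrading, Submodule.mem_pi]

lemma finrank_piGrading [FiniteDimensional ℝ V] {κ : Type*} [Fintype κ] (deg : κ → ℤ) (k : ℤ) :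
    finrank ℝ (piGrading A deg k) = ∑ i, finrank ℝ (A (k - deg i)) := by
  let f : (∀ i, A (k - deg i)) →ₗ[ℝ] κ → V :=
    LinearMap.pi fun i => (A _).subtype ∘ₗ LinearMap.proj i
  have hf : Function.Injective f := fun x y h => funext fun i => Subtype.ext (congrFun h i)
  have hrange : LinearMap.range f = piGrading A deg k := by
    ext x
    refine ⟨?_, fun hx => ⟨fun i => ⟨x i, mem_piGrading.1 hx i⟩, rfl⟩⟩
    rintro ⟨y, rfl⟩
    exact mem_piGrading.2 fun i => (y i).2
  rw [← hrange, LinearMap.finrank_range_of_inj hf, finrank_pi_fintype]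

lemma WPD.piGrading [FiniteDimensional ℝ V] (hA : WPD d A) {κ : Type} [Finite κ] {deg : κ → ℤ}
    {r : ℕ} (σ : κ ≃ κ) (hσ : ∀ i, deg (σ i) = r - deg i) :
    WPD (d + r) (piGrading A deg) := by
  intro k
  have := Fintype.ofFinite κ
  rw [finrank_piGrading, finrank_piGrading,
    ← σ.sum_comp fun i => finrank ℝ (A ((d + r : ℕ) - k - deg i))]
  refine Finset.sum_congr rfl fun i _ => ?_
  rw [hA, hσ, show (d : ℤ) - (k - deg i) = (d + r : ℕ) - k - (r - deg i) by push_cast; ring]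

/-- The operator `L ⊗ 1 + 1 ⊗ x` on `A ⊗ ℝ[x]/(x^(n+1))`, where the tuple `a` stands for
`∑ j, a j ⊗ x^j`. -/
def stringOp (L : V →ₗ[ℝ] V) (n : ℕ) : (Fin (n + 1) → V) →ₗ[ℝ] (Fin (n + 1) → V) :=
  LinearMap.pi fun j => L ∘ₗ LinearMap.proj j + Fin.cases 0 (fun i => LinearMap.proj i.castSucc) j

/-- The tensor product of `Φ` with the form `(p, q) ↦ [x^n] p q` on `ℝ[x]/(x^(n+1))`. -/
def stringForm (Φ : LinearMap.BilinForm ℝ V) (n : ℕ) : LinearMap.BilinForm ℝ (Fin (n + 1) → V) :=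
  ∑ j, Φ.compl₁₂ (LinearMap.proj j) (LinearMap.proj j.rev)

/-- The grading of `A ⊗ ℝ[x]/(x^(n+1))` with `x` of degree one. -/
abbrev stringGrading (A : ℤ → Submodule ℝ V) (n : ℕ) : ℤ → Submodule ℝ (Fin (n + 1) → V) :=
  piGrading A fun j => j

lemma stringOp_apply_zero (n : ℕ) (a : Fin (n + 1) → V) : stringOp L n a 0 = L (a 0) :=
  add_zero _

lemma stringOp_apply_succ (n : ℕ) (a : Fin (n + 1) → V) (j : Fin n) :
    stringOp L n a j.succ = L (a j.succ) + a j.castSucc := rfl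

lemma stringForm_apply (n : ℕ) (a b : Fin (n + 1) → V) :
    stringForm Φ n a b = ∑ j, Φ (a j) (b j.rev) := by
  simp [stringForm, LinearMap.sum_apply]

/-- The embedding of `A ⊗ ℝ[z]/(z^(n+2))` into `A ⊗ ℝ[x]/(x^(n+1)) ⊗ ℝ[y]/(y²)` given by
`z ↦ x + y`, that is `z^j ↦ x^j + j x^(j-1) y`. -/
def stringToDouble (V : Type) [AddCommGroup V] [Module ℝ V] (n : ℕ) :
    (Fin (n + 2) → V) →ₗ[ℝ] (Fin (n + 1) → V) × (Fin (n + 1) → V) :=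
  (LinearMap.pi fun j : Fin (n + 1) => LinearMap.proj j.castSucc).prod
    (LinearMap.pi fun j : Fin (n + 1) => ((j : ℕ) + 1 : ℝ) • LinearMap.proj j.succ)

lemma stringToDouble_apply (n : ℕ) (a : Fin (n + 2) → V) :
    stringToDouble V n a = (fun j : Fin (n + 1) => a j.castSucc,
      fun j : Fin (n + 1) => ((j : ℕ) + 1 : ℝ) • a j.succ) := rfl

lemma stringToDouble_injective (n : ℕ) : Function.Injective (stringToDouble V n) := by
  refine (injective_iff_map_eq_zero _).2 fun a ha => funext fun j => ?_
  obtain ⟨hfst, hsnd⟩ := Prod.mk_eq_zero.1 ha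
  cases j using Fin.cases with
  | zero => exact congrFun hfst 0
  | succ j => exact (smul_eq_zero.1 (congrFun hsnd j)).resolve_left (by positivity)

lemma stringToDouble_mem_iff (n : ℕ) (k : ℤ) (a : Fin (n + 2) → V) :
    stringToDouble V n a ∈ doubleGrading (stringGrading A n) k ↔ a ∈ stringGrading A (n + 1) k := by
  have hsmul : ∀ j : Fin (n + 1), ((j : ℕ) + 1 : ℝ) • a j.succ ∈ A (k - 1 - (j : ℕ)) ↔
      a j.succ ∈ A (k - (j.succ : ℕ)) := fun j => by
    rw [Submodule.smul_mem_iff _ (by positivity), Fin.val_succ, Nat.cast_succ, sub_sub,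
      add_comm (1 : ℤ)]
  simp only [stringToDouble_apply, doubleGrading, Submodule.mem_prod, mem_piGrading, hsmul]
  refine ⟨fun h j => ?_, fun h => ⟨fun j => h j.castSucc, fun j => h j.succ⟩⟩
  cases j using Fin.cases with
  | zero => exact h.1 0
  | succ j => exact h.2 j

lemma stringToDouble_stringOp (n : ℕ) (a : Fin (n + 2) → V) :
    stringToDouble V n (stringOp L (n + 1) a) =
      doubleOp (stringOp L n) (stringToDouble V n a) := by
  rw [stringToDouble_apply, stringToDouble_apply, doubleOp_apply]
  refine Prod.ext (funext fun j => ?_) (funext fun j => ?_)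
  · cases j using Fin.cases with
    | zero =>
      exact (stringOp_apply_zero (n + 1) a).trans
        (stringOp_apply_zero n fun j => a j.castSucc).symm
    | succ j => exact stringOp_apply_succ (n + 1) a j.castSucc
  · change ((j : ℕ) + 1 : ℝ) • stringOp L (n + 1) a j.succ =
      a j.castSucc + stringOp L n (fun j => ((j : ℕ) + 1 : ℝ) • a j.succ) j
    rw [stringOp_apply_succ]
    cases j using Fin.cases with
    | zero => simp [stringOp_apply_zero, add_comm]
    | succ j =>
      rw [stringOp_apply_succ, map_smul, Fin.val_succ, Fin.val_castSucc, Fin.succ_castSucc]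
      push_cast
      module

lemma doubleForm_stringToDouble (n : ℕ) (a b : Fin (n + 2) → V) :
    doubleForm (stringForm Φ n) (stringToDouble V n a) (stringToDouble V n b) =
      (n + 1) * stringForm Φ (n + 1) a b := by
  have hfst : ∀ j : Fin (n + 1), Φ (a j.castSucc) (((j.rev : ℕ) + 1 : ℝ) • b j.rev.succ) =
      (n + 1 - (j.castSucc : ℕ) : ℝ) * Φ (a j.castSucc) (b j.castSucc.rev) := fun j => by
    rw [map_smul, smul_eq_mul, Fin.rev_castSucc, Fin.val_castSucc, Fin.val_rev,
      Nat.cast_sub (by omega)]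
    push_cast
    ring
  have hsnd : ∀ j : Fin (n + 1), Φ (((j : ℕ) + 1 : ℝ) • a j.succ) (b j.rev.castSucc) =
      (j.succ : ℕ) * Φ (a j.succ) (b j.succ.rev) := fun j => by
    rw [map_smul, LinearMap.smul_apply, smul_eq_mul, Fin.rev_succ, Fin.val_succ, Nat.cast_succ]
  have hfst_sum : ∑ j : Fin (n + 1), Φ (a j.castSucc) (((j.rev : ℕ) + 1 : ℝ) • b j.rev.succ) =
      ∑ j : Fin (n + 2), (n + 1 - (j : ℕ) : ℝ) * Φ (a j) (b j.rev) := by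
    rw [Finset.sum_congr rfl fun j _ => hfst j, Fin.sum_univ_castSucc (n := n + 1)]
    simp
  have hsnd_sum : ∑ j : Fin (n + 1), Φ (((j : ℕ) + 1 : ℝ) • a j.succ) (b j.rev.castSucc) =
      ∑ j : Fin (n + 2), ((j : ℕ) : ℝ) * Φ (a j) (b j.rev) := by
    rw [Finset.sum_congr rfl fun j _ => hsnd j, Fin.sum_univ_succ (n := n + 1)]
    simp
  rw [doubleForm_apply, stringForm_apply, stringForm_apply, stringForm_apply, stringToDouble_apply,
    stringToDouble_apply, hfst_sum, hsnd_sum, ← Finset.sum_add_distrib, Finset.mul_sum]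
  exact Finset.sum_congr rfl fun j _ => by ring

lemma wpd_stringGrading [FiniteDimensional ℝ V] (hA : WPD d A) (n : ℕ) :
    WPD (d + n) (stringGrading A n) :=
  hA.piGrading Fin.revPerm fun j => by
    rw [Fin.revPerm_apply, Fin.val_rev]
    omega

lemma IsPolarized.string [FiniteDimensional ℝ V] (h : IsPolarized d A Φ L) (hA : WPD d A) (n : ℕ) :
    IsPolarized (d + n) (stringGrading A n) (stringForm Φ n) (stringOp L n) := by
  induction n with
  | zero =>
    refine h.of_injective (f := LinearMap.proj 0) (LinearEquiv.funUnique (Fin 1) ℝ V).injective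
      (fun k x => ?_) (stringOp_apply_zero 0) one_pos fun x y => ?_
    · simp [mem_piGrading]
    · simp [stringForm_apply]
  | succ n ih =>
    refine (ih.double (wpd_stringGrading hA n)).of_injective (stringToDouble_injective n)
      (fun k x => (stringToDouble_mem_iff n k x).symm) (stringToDouble_stringOp n)
      (r := (n + 1 : ℝ)⁻¹) (by positivity) fun x y => ?_
    rw [doubleForm_stringToDouble, inv_mul_cancel_left₀ (by positivity)]

end StringModel

section LefschetzSystem

variable {V : Type} [AddCommGroup V] [Module ℝ V] {d : ℕ} {B : ℤ → Submodule ℝ V}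
  {Ψ : LinearMap.BilinForm ℝ V} {M : V →ₗ[ℝ] V}

/-- Generators of a decomposition of a graded space into pairwise orthogonal Lefschetz strings
`gen c, M (gen c), …, M ^ len c (gen c)`, each centred in degree `d / 2`. -/
structure LefschetzSystem (ι : Type) (d : ℕ) (B : ℤ → Submodule ℝ V)
    (Ψ : LinearMap.BilinForm ℝ V) (M : V →ₗ[ℝ] V) where
  gen : ι → V
  deg : ι → ℤ
  len : ι → ℕ
  two_mul_deg_add_len : ∀ c, 2 * deg c + len c = d
  adj : ∀ x y, Ψ (M x) y = Ψ x (M y)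
  gen_mem : ∀ c, gen c ∈ B (deg c)
  pow_gen : ∀ c, (M ^ (len c + 1)) (gen c) = 0
  pos : ∀ c, 0 < (-1 : ℝ) ^ deg c * Ψ (gen c) ((M ^ len c) (gen c))
  form_gen_pow_gen : ∀ c c' n, (c = c' → n ≠ len c) → Ψ (gen c) ((M ^ n) (gen c')) = 0
  span_eq_top :
    Submodule.span ℝ (Set.range fun i : Σ c, Fin (len c + 1) => (M ^ (i.2 : ℕ)) (gen i.1)) = ⊤

namespace LefschetzSystem

variable {ι : Type} (S : LefschetzSystem ι d B Ψ M)

/-- The positions in the strings: `⟨c, j⟩` stands for the vector `M ^ j (gen c)`. -/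
abbrev Index : Type := Σ c, Fin (S.len c + 1)

/-- The vector at a position of a string. -/
def vec (i : S.Index) : V := (M ^ (i.2 : ℕ)) (S.gen i.1)

/-- The degree of the vector at a position of a string. -/
def degree (i : S.Index) : ℤ := S.deg i.1 + (i.2 : ℕ)

/-- The pairing of the two ends of a string, a number of sign `(-1) ^ deg c`. -/
def topPairing (c : ι) : ℝ := Ψ (S.gen c) ((M ^ S.len c) (S.gen c))

/-- The linear form dual to `vec i`: up to a scalar, the pairing with the mirror position. -/
noncomputable def dual (i : S.Index) : Dual ℝ V := (S.topPairing i.1)⁻¹ • Ψ (S.vec ⟨i.1, i.2.rev⟩)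

lemma topPairing_ne_zero (c : ι) : S.topPairing c ≠ 0 := fun h => by
  have := S.pos c
  rw [← topPairing, h, mul_zero] at this
  exact this.false

lemma dual_apply (c : ι) (j : Fin (S.len c + 1)) (x : V) :
    S.dual ⟨c, j⟩ x = (S.topPairing c)⁻¹ * Ψ (S.gen c) ((M ^ (S.len c - j)) x) := by
  rw [dual, LinearMap.smul_apply, smul_eq_mul, vec, apply_pow_left_eq S.adj, Fin.val_rev,
    Nat.add_sub_add_right]

lemma dual_vec (c c' : ι) (j : Fin (S.len c + 1)) (i : Fin (S.len c' + 1)) :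
    S.dual ⟨c, j⟩ (S.vec ⟨c', i⟩) =
      (S.topPairing c)⁻¹ * Ψ (S.gen c) ((M ^ (S.len c - j + i)) (S.gen c')) := by
  rw [dual_apply, vec, ← Module.End.mul_apply, ← pow_add]

lemma dual_vec_self (i : S.Index) : S.dual i (S.vec i) = 1 := by
  rw [dual_vec, Nat.sub_add_cancel (by omega), ← topPairing,
    inv_mul_cancel₀ (S.topPairing_ne_zero _)]

lemma dual_vec_of_ne {i i' : S.Index} (h : i ≠ i') : S.dual i (S.vec i') = 0 := by
  obtain ⟨c, j⟩ := i
  obtain ⟨c', j'⟩ := i'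
  rw [dual_vec, S.form_gen_pow_gen, mul_zero]
  rintro rfl hlen
  exact h (by rw [Fin.ext (by omega : (j : ℕ) = j')])

lemma linearIndependent_vec : LinearIndependent ℝ S.vec :=
  .of_pairwise_dual_eq_zero_one _ S.dual (fun _ _ h => S.dual_vec_of_ne h) S.dual_vec_self

/-- The basis formed by the vectors of all strings. -/
noncomputable def basis : Basis S.Index ℝ V :=
  Basis.mk S.linearIndependent_vec S.span_eq_top.ge

lemma basis_apply (i : S.Index) : S.basis i = S.vec i := Basis.mk_apply _ _ i

lemma basis_repr_apply (x : V) (i : S.Index) : S.basis.repr x i = S.dual i x := by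
  classical
  suffices S.basis.coord i = S.dual i from LinearMap.congr_fun this x
  refine S.basis.ext fun i' => ?_
  rw [Basis.coord_apply, Basis.repr_self, Finsupp.single_apply, basis_apply]
  split_ifs with h
  · rw [h, dual_vec_self]
  · rw [S.dual_vec_of_ne (Ne.symm h)]

lemma vec_mem (hM : ∀ k, ∀ x ∈ B k, M x ∈ B (k + 1)) (i : S.Index) : S.vec i ∈ B (S.degree i) :=
  pow_apply_mem hM _ (S.gen_mem i.1)

lemma basis_repr_eq_zero_of_mem (hM : ∀ k, ∀ x ∈ B k, M x ∈ B (k + 1))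
    (horth : ∀ j k : ℤ, j + k ≠ (d : ℤ) → ∀ x ∈ B j, ∀ y ∈ B k, Ψ x y = 0) {k : ℤ} {x : V}
    (hx : x ∈ B k) {i : S.Index} (hi : S.degree i ≠ k) : S.basis.repr x i = 0 := by
  obtain ⟨c, j⟩ := i
  have hlen := S.two_mul_deg_add_len c
  rw [basis_repr_apply, dual_apply, horth _ _ ?_ _ (S.gen_mem c) _ (pow_apply_mem hM _ hx),
    mul_zero]
  rw [degree] at hi
  dsimp only at hi
  omega

lemma basis_repr_map_zero (c : ι) (x : V) : S.basis.repr (M x) ⟨c, 0⟩ = 0 := by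
  rw [basis_repr_apply, dual_apply, Fin.val_zero, Nat.sub_zero, ← Module.End.mul_apply, ← pow_succ,
    ← apply_pow_left_eq S.adj, S.pow_gen, map_zero, LinearMap.zero_apply, mul_zero]

lemma basis_repr_map_succ (c : ι) (j : Fin (S.len c)) (x : V) :
    S.basis.repr (M x) ⟨c, j.succ⟩ = S.basis.repr x ⟨c, j.castSucc⟩ := by
  rw [basis_repr_apply, basis_repr_apply, dual_apply, dual_apply, ← Module.End.mul_apply,
    ← pow_succ, Fin.val_succ, Fin.val_castSucc, show S.len c - (j + 1) + 1 = S.len c - j by omega]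

lemma form_eq_sum [Fintype ι] (x y : V) :
    Ψ x y = ∑ c, S.topPairing c * ∑ j, S.basis.repr x ⟨c, j⟩ * S.basis.repr y ⟨c, j.rev⟩ := by
  conv_lhs => rw [← S.basis.sum_repr x]
  simp only [map_sum, map_smul, LinearMap.sum_apply, LinearMap.smul_apply, smul_eq_mul,
    Fintype.sum_sigma, Finset.mul_sum]
  refine Finset.sum_congr rfl fun c _ => Finset.sum_congr rfl fun j _ => ?_
  rw [S.basis_repr_apply y, dual, basis_apply, Fin.rev_rev, LinearMap.smul_apply, smul_eq_mul,
    mul_left_comm, mul_inv_cancel_left₀ (S.topPairing_ne_zero c)]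

end LefschetzSystem

lemma span_range_pow_le_comap {ι : Type*} {gen : ι → V} {len : ι → ℕ}
    (hgen : ∀ c, (M ^ (len c + 1)) (gen c) = 0) :
    Submodule.span ℝ (Set.range fun i : Σ c, Fin (len c + 1) => (M ^ (i.2 : ℕ)) (gen i.1)) ≤
      (Submodule.span ℝ
        (Set.range fun i : Σ c, Fin (len c + 1) => (M ^ (i.2 : ℕ)) (gen i.1))).comap M := by
  refine Submodule.span_le.2 ?_
  rintro _ ⟨⟨c, j⟩, rfl⟩
  rw [SetLike.mem_coe, Submodule.mem_comap, ← Module.End.mul_apply, ← pow_succ']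
  rcases Nat.lt_or_ge (j + 1) (len c + 1) with hj | hj
  · exact Submodule.subset_span ⟨⟨c, ⟨j + 1, hj⟩⟩, rfl⟩
  · rw [Module.End.pow_map_zero_of_le hj (hgen c)]
    exact zero_mem _

/-- The primitive vectors of degree `k`, meaningful for `2 * k ≤ d`. -/
def primitive (d : ℕ) (B : ℤ → Submodule ℝ V) (M : V →ₗ[ℝ] V) (k : ℕ) : Submodule ℝ V :=
  B k ⊓ LinearMap.ker (M ^ (d - 2 * k + 1))

namespace IsPolarized

lemma form_pow_primitive_eq_zero (h : IsPolarized d B Ψ M)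
    (horth : ∀ j k : ℤ, j + k ≠ (d : ℤ) → ∀ x ∈ B j, ∀ y ∈ B k, Ψ x y = 0) {k k' m : ℕ}
    (hk : 2 * k ≤ d) (hk' : 2 * k' ≤ d) (hm : k = k' → m ≠ d - 2 * k) {u u' : V}
    (hu : u ∈ primitive d B M k) (hu' : u' ∈ primitive d B M k') : Ψ u ((M ^ m) u') = 0 := by
  by_cases hdeg : (k : ℤ) + (k' + m) = d
  · rcases lt_or_gt_of_ne (show k ≠ k' by omega) with hlt | hlt
    · rw [Module.End.pow_map_zero_of_le (by omega) hu'.2, map_zero]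
    · rw [← apply_pow_left_eq h.adj, Module.End.pow_map_zero_of_le (by omega) hu.2, map_zero,
        LinearMap.zero_apply]
  · exact horth _ _ hdeg _ hu.1 _ (pow_apply_mem h.map_mem m hu'.1)

variable [FiniteDimensional ℝ V]

lemma exists_orthogonal_basis_primitive (h : IsPolarized d B Ψ M) (k : ℕ) :
    ∃ v : Basis (Fin (finrank ℝ (primitive d B M k))) ℝ (primitive d B M k),
      ∀ i j, i ≠ j → Ψ (v i) ((M ^ (d - 2 * k)) (v j)) = 0 := by
  obtain ⟨v, hv⟩ := LinearMap.BilinForm.exists_orthogonal_basis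
    (B := LinearMap.BilinForm.restrict (Ψ.compl₂ (M ^ (d - 2 * k))) (primitive d B M k))
    ⟨fun x y => compl₂_pow_symm h.symm h.adj _ (x : V) y⟩
  exact ⟨v, fun i j hij => hv hij⟩

lemma le_of_primitive_le (h : IsPolarized d B Ψ M) (hB : WPD d B) (hneg : B (-1) = ⊥)
    {W : Submodule ℝ V} (hMW : W ≤ W.comap M) (hW : ∀ k, 2 * k ≤ d → primitive d B M k ≤ W) {K : ℕ}
    (hK : 2 * K ≤ d + 2) : B (K - 1) ≤ W := by
  induction K with
  | zero => rw [Nat.cast_zero, zero_sub, hneg]; exact bot_le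
  | succ k ih =>
    intro x hx
    rw [Nat.cast_succ, add_sub_cancel_right] at hx
    obtain ⟨y, hy, hxy⟩ : (M ^ (d - 2 * k + 1)) x ∈ (B (k - 1)).map (M ^ (d - 2 * k + 2)) := by
      rw [h.map_pow_eq hB (by push_cast; omega), show (k : ℤ) - 1 + (d - 2 * k + 2 : ℕ) =
        k + (d - 2 * k + 1 : ℕ) by push_cast; ring]
      exact pow_apply_mem h.map_mem _ hx
    have hprim : x - M y ∈ primitive d B M k := by
      refine ⟨sub_mem hx (map_mem_level h.map_mem k hy), ?_⟩
      rw [SetLike.mem_coe, LinearMap.mem_ker, map_sub, ← hxy, ← Module.End.mul_apply, ← pow_succ,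
        sub_self]
    simpa using add_mem (hW k (by omega) hprim) (hMW (ih (by omega) hy))

lemma eq_top_of_primitive_le (h : IsPolarized d B Ψ M) (hB : WPD d B) (hneg : ∀ k < 0, B k = ⊥)
    (hspan : ⨆ k, B k = ⊤) {W : Submodule ℝ V} (hMW : W ≤ W.comap M)
    (hW : ∀ k, 2 * k ≤ d → primitive d B M k ≤ W) : W = ⊤ := by
  have hlow : ∀ k : ℤ, 2 * k ≤ d → B k ≤ W := fun k hk => by
    rcases lt_or_ge k 0 with hk0 | hk0
    · rw [hneg k hk0]; exact bot_le
    lift k to ℕ using hk0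
    simpa using h.le_of_primitive_le hB (hneg _ (by norm_num)) hMW hW (K := k + 1) (by omega)
  rw [eq_top_iff, ← hspan]
  refine iSup_le fun m => ?_
  rcases le_or_gt (2 * m) d with hm | hm
  · exact hlow m hm
  obtain ⟨n, hn⟩ := Int.eq_ofNat_of_zero_le (show 0 ≤ 2 * m - d by omega)
  rw [show m = (d - m) + n by omega, ← h.map_pow_eq hB (by omega), Submodule.map_le_iff_le_comap]
  exact (hlow _ (by omega)).trans (W.le_comap_pow_of_le_comap hMW n)

lemma exists_lefschetzSystem (h : IsPolarized d B Ψ M) (hB : WPD d B) (hneg : ∀ k < 0, B k = ⊥)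
    (hspan : ⨆ k, B k = ⊤)
    (horth : ∀ j k : ℤ, j + k ≠ (d : ℤ) → ∀ x ∈ B j, ∀ y ∈ B k, Ψ x y = 0) :
    ∃ (ι : Type) (_ : Fintype ι), Nonempty (LefschetzSystem ι d B Ψ M) := by
  choose v hv using h.exists_orthogonal_basis_primitive
  refine ⟨Σ k : Fin (d / 2 + 1), Fin (finrank ℝ (primitive d B M k)), inferInstance, ⟨{
    gen c := v c.1 c.2
    deg c := c.1
    len c := d - 2 * c.1
    two_mul_deg_add_len c := by omega
    adj := h.adj
    gen_mem c := (v c.1 c.2).2.1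
    pow_gen c := (v c.1 c.2).2.2
    pos c := h.pos _ _ (by omega) _ (v c.1 c.2).2.1 (v c.1 c.2).2.2
      (Subtype.coe_ne_coe.2 ((v c.1).ne_zero c.2))
    form_gen_pow_gen := ?_
    span_eq_top := ?_ }⟩⟩
  · rintro ⟨k, i⟩ ⟨k', i'⟩ n hn
    by_cases hkn : k = k' ∧ n = d - 2 * k
    · obtain ⟨rfl, rfl⟩ := hkn
      exact hv k i i' fun hi => hn (by rw [hi]) rfl
    · exact h.form_pow_primitive_eq_zero horth (by omega) (by omega)
        (fun hk hm => hkn ⟨Fin.ext hk, hm⟩) (v k i).2 (v k' i').2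
  · refine h.eq_top_of_primitive_le hB hneg hspan (span_range_pow_le_comap
      (gen := fun c : Σ k : Fin (d / 2 + 1), Fin (finrank ℝ (primitive d B M k)) => (v c.1 c.2 : V))
      (len := fun c => d - 2 * c.1) fun c => (v c.1 c.2).2.2) fun k hk => ?_
    rw [← Submodule.range_subtype (primitive d B M k), ← Submodule.map_top, ← (v k).span_eq,
      Submodule.map_span, Submodule.span_le]
    rintro _ ⟨_, ⟨i, rfl⟩, rfl⟩
    exact Submodule.subset_span ⟨⟨⟨⟨k, by omega⟩, i⟩, 0⟩, rfl⟩

end IsPolarized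
end LefschetzSystem

section TensorProduct

open TensorProduct

variable {V : Type} [AddCommGroup V] [Module ℝ V] {V' : Type} [AddCommGroup V'] [Module ℝ V']
  {A : ℤ → Submodule ℝ V} {B : ℤ → Submodule ℝ V'} {Φ : LinearMap.BilinForm ℝ V}
  {Ψ : LinearMap.BilinForm ℝ V'} {L : V →ₗ[ℝ] V} {M : V' →ₗ[ℝ] V'} {d e : ℕ}

/-- The grading of `A ⊗ B` by total degree. -/
abbrev tensorGrading (A : ℤ → Submodule ℝ V) (B : ℤ → Submodule ℝ V') (m : ℤ) :
    Submodule ℝ (V ⊗[ℝ] V') :=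
  ⨆ i : ℤ, Submodule.map₂ (TensorProduct.mk ℝ V V') (A i) (B (m - i))

lemma tensorGrading_eq_bot_of_neg (hA : ∀ k < 0, A k = ⊥) (hB : ∀ k < 0, B k = ⊥) {m : ℤ}
    (hm : m < 0) : tensorGrading A B m = ⊥ := by
  refine iSup_eq_bot.2 fun i => ?_
  rcases lt_or_ge i 0 with hi | hi
  · rw [hA i hi, Submodule.map₂_bot_left]
  · rw [hB (m - i) (by omega), Submodule.map₂_bot_right]

section Basis

variable {κ : Type}

/-- The coordinates in `V` of the elements of `V ⊗ V'` with respect to a basis of `V'`. -/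
noncomputable def tensorCoord [Finite κ] (b : Basis κ ℝ V') : V ⊗[ℝ] V' ≃ₗ[ℝ] (κ → V) :=
  letI := Classical.decEq κ
  equivFinsuppOfBasisRight b ≪≫ₗ Finsupp.linearEquivFunOnFinite ℝ V κ

lemma tensorCoord_tmul [Finite κ] (b : Basis κ ℝ V') (x : V) (y : V') (i : κ) :
    tensorCoord b (x ⊗ₜ y) i = b.repr y i • x :=
  letI := Classical.decEq κ
  equivFinsuppOfBasisRight_apply_tmul_apply b x y i

lemma sum_tensorCoord_tmul [Fintype κ] (b : Basis κ ℝ V') (x : V ⊗[ℝ] V') :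
    ∑ i, tensorCoord b x i ⊗ₜ b i = x := by
  induction x with
  | zero => simp
  | tmul x y =>
    simp only [tensorCoord_tmul, smul_tmul]
    rw [← tmul_sum, b.sum_repr]
  | add x y hx hy => simp only [map_add, Pi.add_apply, add_tmul, Finset.sum_add_distrib, hx, hy]

lemma mem_tensorGrading_iff [Finite κ] {b : Basis κ ℝ V'} {deg : κ → ℤ}
    (hb : ∀ i, b i ∈ B (deg i)) (hB : ∀ k, ∀ y ∈ B k, ∀ i, deg i ≠ k → b.repr y i = 0) (m : ℤ)
    (x : V ⊗[ℝ] V') :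
    x ∈ tensorGrading A B m ↔ tensorCoord b x ∈ piGrading A deg m := by
  refine ⟨fun hx => ?_, fun hx => ?_⟩
  · suffices tensorGrading A B m ≤ (piGrading A deg m).comap (tensorCoord b).toLinearMap from
      this hx
    refine iSup_le fun k => Submodule.map₂_le.2 fun a ha y hy => mem_piGrading.2 fun i => ?_
    change tensorCoord b (a ⊗ₜ y) i ∈ _
    rw [tensorCoord_tmul]
    by_cases hi : deg i = m - k
    · rw [hi, sub_sub_cancel]
      exact Submodule.smul_mem _ _ ha
    · rw [hB _ y hy i hi, zero_smul]
      exact zero_mem _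
  · have := Fintype.ofFinite κ
    rw [← sum_tensorCoord_tmul b x]
    refine sum_mem fun i _ => Submodule.mem_iSup_of_mem (m - deg i) ?_
    refine Submodule.apply_mem_map₂ _ (mem_piGrading.1 hx i) ?_
    rw [sub_sub_cancel]
    exact hb i

lemma finrank_tensorGrading [Finite κ] {b : Basis κ ℝ V'} {deg : κ → ℤ}
    (hb : ∀ i, b i ∈ B (deg i)) (hB : ∀ k, ∀ y ∈ B k, ∀ i, deg i ≠ k → b.repr y i = 0) (m : ℤ) :
    finrank ℝ (tensorGrading A B m) = finrank ℝ (piGrading A deg m) := by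
  have hmap : (tensorGrading A B m).map (tensorCoord b).toLinearMap = piGrading A deg m := by
    ext x
    rw [Submodule.mem_map_equiv, mem_tensorGrading_iff hb hB, LinearEquiv.apply_symm_apply]
  rw [← hmap, LinearEquiv.finrank_map_eq]

end Basis

namespace LefschetzSystem

variable {ι : Type}

lemma wpd_tensorGrading [FiniteDimensional ℝ V] [Finite ι] (S : LefschetzSystem ι e B Ψ M)
    (hA : WPD d A) (hM : ∀ k, ∀ x ∈ B k, M x ∈ B (k + 1))
    (horth : ∀ j k : ℤ, j + k ≠ (e : ℤ) → ∀ x ∈ B j, ∀ y ∈ B k, Ψ x y = 0) :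
    WPD (d + e) (tensorGrading A B) := fun m => by
  have hbasis : ∀ i, S.basis i ∈ B (S.degree i) := fun i => S.basis_apply i ▸ S.vec_mem hM i
  have hrepr : ∀ k, ∀ y ∈ B k, ∀ i, S.degree i ≠ k → S.basis.repr y i = 0 :=
    fun _ _ hy _ => S.basis_repr_eq_zero_of_mem hM horth hy
  rw [finrank_tensorGrading hbasis hrepr, finrank_tensorGrading hbasis hrepr]
  refine hA.piGrading (Equiv.sigmaCongrRight fun c => Fin.revPerm) ?_ m
  rintro ⟨c, j⟩
  change S.deg c + (j.rev : ℕ) = e - (S.deg c + (j : ℕ))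
  have := S.two_mul_deg_add_len c
  rw [Fin.val_rev]
  omega

/-- The coordinates of a tensor along the string generated by `gen c`. -/
noncomputable def stringCoord [Finite ι] (S : LefschetzSystem ι e B Ψ M) (c : ι) :
    V ⊗[ℝ] V' →ₗ[ℝ] (Fin (S.len c + 1) → V) :=
  LinearMap.funLeft ℝ V (fun j => (⟨c, j⟩ : S.Index)) ∘ₗ (tensorCoord S.basis).toLinearMap

lemma stringCoord_tmul [Finite ι] (S : LefschetzSystem ι e B Ψ M) (c : ι) (x : V) (y : V')
    (j : Fin (S.len c + 1)) :
    S.stringCoord c (x ⊗ₜ y) j = S.basis.repr y ⟨c, j⟩ • x :=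
  tensorCoord_tmul S.basis x y ⟨c, j⟩

lemma stringCoord_map [Finite ι] (S : LefschetzSystem ι e B Ψ M) (c : ι) (x : V ⊗[ℝ] V') :
    S.stringCoord c ((L.rTensor V' + M.lTensor V) x) =
      stringOp L (S.len c) (S.stringCoord c x) := by
  induction x with
  | zero => simp only [map_zero]
  | add x y hx hy => simp only [map_add, hx, hy]
  | tmul x y =>
    rw [LinearMap.add_apply, LinearMap.rTensor_tmul, LinearMap.lTensor_tmul, map_add]
    ext j
    rw [Pi.add_apply, stringCoord_tmul, stringCoord_tmul]
    cases j using Fin.cases with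
    | zero => rw [basis_repr_map_zero, stringOp_apply_zero, stringCoord_tmul, map_smul, zero_smul,
        add_zero]
    | succ j => rw [basis_repr_map_succ, stringOp_apply_succ, stringCoord_tmul, stringCoord_tmul,
        map_smul]

lemma tmul_eq_sum_stringForm [Fintype ι] (S : LefschetzSystem ι e B Ψ M) (x y : V ⊗[ℝ] V') :
    LinearMap.BilinForm.tmul Φ Ψ x y =
      ∑ c, S.topPairing c * stringForm Φ (S.len c) (S.stringCoord c x) (S.stringCoord c y) := by
  induction x with
  | zero => simp only [map_zero, LinearMap.zero_apply, mul_zero, Finset.sum_const_zero]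
  | add x x' hx hx' =>
    simp only [map_add, LinearMap.add_apply, hx, hx', mul_add, Finset.sum_add_distrib]
  | tmul a b =>
    induction y with
    | zero => simp only [map_zero, mul_zero, Finset.sum_const_zero]
    | add y y' hy hy' => simp only [map_add, hy, hy', mul_add, Finset.sum_add_distrib]
    | tmul a' b' =>
      rw [LinearMap.BilinForm.tensorDistrib_tmul, S.form_eq_sum b b', smul_eq_mul, Finset.sum_mul]
      refine Finset.sum_congr rfl fun c _ => ?_
      rw [stringForm_apply, mul_assoc, Finset.sum_mul]
      refine congrArg _ (Finset.sum_congr rfl fun j _ => ?_)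
      simp only [stringCoord_tmul, map_smul, LinearMap.smul_apply, smul_eq_mul]
      ring

lemma isPolarized_tensor [FiniteDimensional ℝ V] [Finite ι] (S : LefschetzSystem ι e B Ψ M)
    (h : IsPolarized d A Φ L) (hA : WPD d A)
    (hM : ∀ k, ∀ x ∈ B k, M x ∈ B (k + 1))
    (horth : ∀ j k : ℤ, j + k ≠ (e : ℤ) → ∀ x ∈ B j, ∀ y ∈ B k, Ψ x y = 0) :
    IsPolarized (d + e) (tensorGrading A B) (LinearMap.BilinForm.tmul Φ Ψ)
      (L.rTensor V' + M.lTensor V) := by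
  have := Fintype.ofFinite ι
  refine .of_orthogonal_family (fun c => h.string hA (S.len c)) (s := S.deg) (fun c => ?_) S.pos
    S.stringCoord (fun x hx => ?_) (fun k x => ?_) S.stringCoord_map S.tmul_eq_sum_stringForm
  · have := S.two_mul_deg_add_len c
    push_cast
    omega
  · rw [← (tensorCoord S.basis).map_eq_zero_iff]
    exact funext fun i => congrFun (hx i.1) i.2
  · rw [mem_tensorGrading_iff (fun i => S.basis_apply i ▸ S.vec_mem hM i)
      fun _ _ hy _ => S.basis_repr_eq_zero_of_mem hM horth hy]
    simp only [mem_piGrading, Sigma.forall, degree, sub_sub]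
    rfl

end LefschetzSystem
end TensorProduct

end PaperHR

open PaperHR TensorProduct in
theorem statement3_general
    {V : Type} [AddCommGroup V] [Module ℝ V] [FiniteDimensional ℝ V]
    {V' : Type} [AddCommGroup V'] [Module ℝ V'] [FiniteDimensional ℝ V']
    (dA dB : ℕ)
    (A : ℤ → Submodule ℝ V) (hAneg : ∀ k : ℤ, k < 0 → A k = ⊥)
    (B : ℤ → Submodule ℝ V')
    (hB : DirectSum.IsInternal B) (hBneg : ∀ k : ℤ, k < 0 → B k = ⊥)
    (ΦA : V →ₗ[ℝ] V →ₗ[ℝ] ℝ)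
    (hΦAsymm : ∀ x y : V, ΦA x y = ΦA y x)
    (ΦB : V' →ₗ[ℝ] V' →ₗ[ℝ] ℝ)
    (hΦBsymm : ∀ x y : V', ΦB x y = ΦB y x)
    (hΦBorth : ∀ j k : ℤ, j + k ≠ (dB : ℤ) → ∀ x ∈ B j, ∀ y ∈ B k, ΦB x y = 0)
    (LA : V →ₗ[ℝ] V)
    (hLA : ∀ k : ℤ, ∀ x ∈ A k, LA x ∈ A (k + 1))
    (hLAadj : ∀ x y : V, ΦA (LA x) y = ΦA x (LA y))
    (LB : V' →ₗ[ℝ] V')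
    (hLB : ∀ k : ℤ, ∀ x ∈ B k, LB x ∈ B (k + 1))
    (hLBadj : ∀ x y : V', ΦB (LB x) y = ΦB x (LB y))
    (hHRA : HR dA A ΦA LA) (hHRB : HR dB B ΦB LB) :
    HR (dA + dB)
      (fun m : ℤ => ⨆ i : ℤ, Submodule.map₂ (TensorProduct.mk ℝ V V') (A i) (B (m - i)))
      (LinearMap.BilinForm.tmul ΦA ΦB)
      (LinearMap.rTensor V' LA + LinearMap.lTensor V LB) := by
  have hpolA : IsPolarized dA A ΦA LA := hHRA.isPolarized hAneg hLA hΦAsymm hLAadj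
  have hpolB : IsPolarized dB B ΦB LB := hHRB.isPolarized hBneg hLB hΦBsymm hLBadj
  obtain ⟨ι, _, ⟨S⟩⟩ :=
    hpolB.exists_lefschetzSystem hHRB.1 hBneg hB.submodule_iSup_eq_top hΦBorth
  exact (S.isPolarized_tensor hpolA hHRA.1 hLB hΦBorth).hr (S.wpd_tensorGrading hHRA.1 hLB hΦBorth)
    (tensorGrading_eq_bot_of_neg hAneg hBneg (by norm_num))

open PaperHR TensorProduct in
/-- if `HR^{d_A}(A, L_A, Φ_A)` and `HR^{d_B}(B, L_B, Φ_B)` hold, then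
`HR^{d_A+d_B}(A ⊗ B, L_A ⊗ id + id ⊗ L_B, Φ_A ⊗ Φ_B)` holds, where `A ⊗ B` carries the
grading `(A ⊗ B)^m = ⨁_{i+j=m} A^i ⊗ B^j` and `(Φ_A ⊗ Φ_B)(a⊗b, a'⊗b') = Φ_A(a,a')·Φ_B(b,b')`. -/
theorem statement3
    {V : Type} [AddCommGroup V] [Module ℝ V] [FiniteDimensional ℝ V]
    {V' : Type} [AddCommGroup V'] [Module ℝ V'] [FiniteDimensional ℝ V']
    (dA dB : ℕ)
    (A : ℤ → Submodule ℝ V)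
    (hA : DirectSum.IsInternal A) (hAneg : ∀ k : ℤ, k < 0 → A k = ⊥)
    (B : ℤ → Submodule ℝ V')
    (hB : DirectSum.IsInternal B) (hBneg : ∀ k : ℤ, k < 0 → B k = ⊥)
    (ΦA : V →ₗ[ℝ] V →ₗ[ℝ] ℝ)
    (hΦAsymm : ∀ x y : V, ΦA x y = ΦA y x)
    (hΦAorth : ∀ j k : ℤ, j + k ≠ (dA : ℤ) → ∀ x ∈ A j, ∀ y ∈ A k, ΦA x y = 0)
    (ΦB : V' →ₗ[ℝ] V' →ₗ[ℝ] ℝ)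
    (hΦBsymm : ∀ x y : V', ΦB x y = ΦB y x)
    (hΦBorth : ∀ j k : ℤ, j + k ≠ (dB : ℤ) → ∀ x ∈ B j, ∀ y ∈ B k, ΦB x y = 0)
    (LA : V →ₗ[ℝ] V)
    (hLA : ∀ k : ℤ, ∀ x ∈ A k, LA x ∈ A (k + 1))
    (hLAadj : ∀ x y : V, ΦA (LA x) y = ΦA x (LA y))
    (LB : V' →ₗ[ℝ] V')
    (hLB : ∀ k : ℤ, ∀ x ∈ B k, LB x ∈ B (k + 1))
    (hLBadj : ∀ x y : V', ΦB (LB x) y = ΦB x (LB y))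
    (hHRA : HR dA A ΦA LA) (hHRB : HR dB B ΦB LB) :
    HR (dA + dB)
      (fun m : ℤ => ⨆ i : ℤ, Submodule.map₂ (TensorProduct.mk ℝ V V') (A i) (B (m - i)))
      (LinearMap.BilinForm.tmul ΦA ΦB)
      (LinearMap.rTensor V' LA + LinearMap.lTensor V LB) := by
  exact statement3_general dA dB A hAneg B hB hBneg ΦA hΦAsymm ΦB hΦBsymm hΦBorth LA hLA hLAadj
    LB hLB hLBadj hHRA hHRB
end

section
/- The subsets {Q ∈ 𝒬 : Q satisfies HL} and {Q ∈ 𝒬 : Q satisfies HR} are open in 𝒬; moreover {Q ∈ 𝒬 : Q satisfies HR} is a closed subset of the topological subspace {Q ∈ 𝒬 : Q satisfies HL}. -/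
open Module

namespace S5

variable {V : Type} [AddCommGroup V] [Module ℝ V]

/-- The truncation `⨁_{0 ≤ k ≤ d/2} A^k`, as a subspace of the ambient space. -/
def W (d : ℕ) (A : ℤ → Submodule ℝ V) : Submodule ℝ V :=
  ⨆ (k : ℕ) (_ : 2 * k ≤ d), A (k : ℤ)

/-- `B` belongs to the space `𝒬`: it is a bilinear, symmetric form on
`V = ⨁_{0 ≤ k ≤ d/2} A^k` for which distinct graded pieces are orthogonal. -/
def IsAdmissible (d : ℕ) (A : ℤ → Submodule ℝ V)
    (B : ↥(W d A) → ↥(W d A) → ℝ) : Prop :=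
  (∀ x x' y, B (x + x') y = B x y + B x' y) ∧
  (∀ (c : ℝ) (x y), B (c • x) y = c * B x y) ∧
  (∀ x y y', B x (y + y') = B x y + B x y') ∧
  (∀ (c : ℝ) (x y), B x (c • y) = c * B x y) ∧
  (∀ x y, B x y = B y x) ∧
  (∀ i j : ℕ, 2 * i ≤ d → 2 * j ≤ d → i ≠ j →
    ∀ x y : ↥(W d A), (x : V) ∈ A (i : ℤ) → (y : V) ∈ A (j : ℤ) → B x y = 0)

/-- The space `𝒬` of admissible bilinear forms, topologized (as a finite-dimensional real
vector space) by pointwise convergence. -/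
abbrev QSpace (d : ℕ) (A : ℤ → Submodule ℝ V) : Type :=
  {B : ↥(W d A) → ↥(W d A) → ℝ // IsAdmissible d A B}

/-- `Q` satisfies `HL`: it is non-degenerate. -/
def HLpred (d : ℕ) (A : ℤ → Submodule ℝ V) (B : ↥(W d A) → ↥(W d A) → ℝ) : Prop :=
  ∀ x : ↥(W d A), (∀ y : ↥(W d A), B x y = 0) → x = 0

/-- The maximal dimension of a subspace of `S` on which the form `B` is positive definite. -/
noncomputable def maxPosDim {M : Type} [AddCommGroup M] [Module ℝ M]
    (B : M → M → ℝ) (S : Submodule ℝ M) : ℕ :=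
  sSup {m : ℕ | ∃ T : Submodule ℝ M, T ≤ S ∧ finrank ℝ T = m ∧ ∀ x ∈ T, x ≠ 0 → 0 < B x x}

/-- The maximal dimension of a subspace of `S` on which the form `B` is negative definite. -/
noncomputable def maxNegDim {M : Type} [AddCommGroup M] [Module ℝ M]
    (B : M → M → ℝ) (S : Submodule ℝ M) : ℕ :=
  sSup {m : ℕ | ∃ T : Submodule ℝ M, T ≤ S ∧ finrank ℝ T = m ∧ ∀ x ∈ T, x ≠ 0 → B x x < 0}

/-- The signature of the restriction of the form `B` to `S`. -/
noncomputable def signature {M : Type} [AddCommGroup M] [Module ℝ M]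
    (B : M → M → ℝ) (S : Submodule ℝ M) : ℤ :=
  (maxPosDim B S : ℤ) - (maxNegDim B S : ℤ)

/-- `Q` satisfies `HR`: it is non-degenerate and, for each `0 ≤ k ≤ d/2`, the signature of its
restriction to `A^k` equals `∑_{i=0}^k (-1)^i (dim A^i - dim A^{i-1})`. -/
def HRpred (d : ℕ) (A : ℤ → Submodule ℝ V) (B : ↥(W d A) → ↥(W d A) → ℝ) : Prop :=
  HLpred d A B ∧ ∀ k : ℕ, 2 * k ≤ d →
    signature B ((A (k : ℤ)).comap (W d A).subtype) =
      ∑ i ∈ Finset.range (k + 1),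
        (-1 : ℤ) ^ i * ((finrank ℝ (A (i : ℤ)) : ℤ) - (finrank ℝ (A ((i : ℤ) - 1)) : ℤ))

end S5

/-!
Positive definiteness is an open condition, since it can be tested on a compact unit sphere. Hence
the maximal dimensions `p` and `q` of a positive and of a negative definite subspace can only jump
up near a given form. By Sylvester's law `p + q` is at most the dimension of the space, with
equality exactly for non-degenerate forms, so near such a form `p` and `q` are constant and
non-degeneracy persists. A non-degenerate form in `𝒬` stays non-degenerate on each of the mutually
orthogonal `A^k`, so the signatures on the `A^k` are locally constant on the `HL` locus, where `HR`
prescribes the values of these finitely many locally constant functions.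
-/

namespace S5

open Topology QuadraticMap
open LinearMap (BilinForm)

section QuadraticForm

lemma posDef_comp_linearEquiv_iff {R M M' N : Type*} [CommSemiring R] [AddCommMonoid M]
    [AddCommMonoid M'] [AddCommMonoid N] [PartialOrder N] [Module R M] [Module R M'] [Module R N]
    {Q : QuadraticMap R M N} (e : M' ≃ₗ[R] M) : (Q.comp e.toLinearMap).PosDef ↔ Q.PosDef := by
  simp [PosDef, e.surjective.forall]

lemma posDef_iff_forall_mem_sphere {N : Type*} [NormedAddCommGroup N] [NormedSpace ℝ N]
    {Q : QuadraticForm ℝ N} : Q.PosDef ↔ ∀ v ∈ Metric.sphere (0 : N) 1, 0 < Q v := by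
  refine ⟨fun hQ v hv ↦ hQ v (ne_zero_of_mem_unit_sphere ⟨v, hv⟩), fun hQ v hv ↦ ?_⟩
  have hpos : 0 < Q (‖v‖⁻¹ • v) := hQ _ (by simp [norm_smul, hv])
  rw [Q.map_smul, smul_eq_mul] at hpos
  exact pos_of_mul_pos_right hpos (mul_self_nonneg _)

lemma sigPos_add_sigNeg_eq_finrank_iff {K M : Type*} [Field K] [LinearOrder K]
    [IsStrictOrderedRing K] [AddCommGroup M] [Module K M] [FiniteDimensional K M]
    {Q : QuadraticForm K M} : sigPos Q + sigNeg Q = finrank K M ↔ Q.radical = ⊥ := by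
  rw [← Submodule.finrank_eq_zero, ← QuadraticForm.sigPos_add_sigNeg_add_radical (Q := Q)]
  lia

end QuadraticForm

section QuadraticFormFamily

variable {X E : Type*} [TopologicalSpace X] [AddCommGroup E] [Module ℝ E]

lemma continuous_apply_equivFun_symm {ι : Type*} [Finite ι] {F : X → QuadraticForm ℝ E}
    (hF : ∀ v, Continuous fun t ↦ F t v) (b : Basis ι ℝ E) :
    Continuous fun p : X × (ι → ℝ) ↦ F p.1 (b.equivFun.symm p.2) := by
  classical
  have := Fintype.ofFinite ι
  let G : X → Matrix ι ι ℝ := fun t ↦ LinearMap.BilinForm.toMatrix b (associated (F t))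
  have hG : Continuous G := continuous_matrix fun i j ↦ by
    simp only [G, LinearMap.BilinForm.toMatrix_apply, associated_apply]
    exact continuous_const.mul (((hF _).sub (hF _)).sub (hF _))
  have hGF : ∀ p : X × (ι → ℝ),
      F p.1 (b.equivFun.symm p.2) = p.2 ⬝ᵥ (G p.1).mulVec p.2 := fun p ↦ by
    rw [← associated_eq_self_apply ℝ (F p.1),
      LinearMap.BilinForm.apply_eq_dotProduct_toMatrix_mulVec b, ← b.equivFun_apply,
      LinearEquiv.apply_symm_apply]
  simp only [hGF]
  fun_prop

variable [FiniteDimensional ℝ E] {F : X → QuadraticForm ℝ E}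

lemma isOpen_setOf_posDef (hF : ∀ v, Continuous fun t ↦ F t v) : IsOpen {t | (F t).PosDef} := by
  let e := (finBasis ℝ E).equivFun.symm
  simp only [← posDef_comp_linearEquiv_iff e, posDef_iff_forall_mem_sphere]
  refine isOpen_iff_eventually.2 fun t ht ↦ ?_
  refine (isCompact_sphere _ _).eventually_forall_of_forall_eventually fun c hc ↦ ?_
  exact (continuous_apply_equivFun_symm hF _).continuousAt.eventually (lt_mem_nhds (ht c hc))

lemma eventually_sigPos_le (hF : ∀ v, Continuous fun t ↦ F t v) (t : X) :
    ∀ᶠ u in 𝓝 t, sigPos (F t) ≤ sigPos (F u) := by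
  obtain ⟨T, hT, hpos⟩ := exists_finrank_eq_sigPos_and_posDef (F t)
  have hopen : IsOpen {u | ((F u).restrict T).PosDef} := isOpen_setOf_posDef fun v ↦ hF v
  filter_upwards [hopen.mem_nhds hpos] with u hu
  exact hT ▸ le_sigPos_of_posDef (F u) hu

lemma eventually_sigNeg_le (hF : ∀ v, Continuous fun t ↦ F t v) (t : X) :
    ∀ᶠ u in 𝓝 t, sigNeg (F t) ≤ sigNeg (F u) :=
  eventually_sigPos_le (F := fun u ↦ -F u) (fun v ↦ (hF v).neg) t

lemma eventually_sigPos_eq_and_sigNeg_eq (hF : ∀ v, Continuous fun t ↦ F t v) {t : X}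
    (ht : (F t).radical = ⊥) :
    ∀ᶠ u in 𝓝 t, sigPos (F u) = sigPos (F t) ∧ sigNeg (F u) = sigNeg (F t) := by
  filter_upwards [eventually_sigPos_le hF t, eventually_sigNeg_le hF t] with u hpos hneg
  have hsum_t := sigPos_add_sigNeg_eq_finrank_iff.2 ht
  have hsum_u := QuadraticForm.sigPos_add_sigNeg_add_radical (Q := F u)
  lia

lemma isOpen_setOf_radical_eq_bot (hF : ∀ v, Continuous fun t ↦ F t v) :
    IsOpen {t | (F t).radical = ⊥} := by
  refine isOpen_iff_eventually.2 fun t ht ↦ ?_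
  filter_upwards [eventually_sigPos_eq_and_sigNeg_eq hF ht] with u ⟨hpos, hneg⟩
  rw [← sigPos_add_sigNeg_eq_finrank_iff, hpos, hneg]
  exact sigPos_add_sigNeg_eq_finrank_iff.2 ht

lemma isLocallyConstant_sigPos_sub_sigNeg (hF : ∀ v, Continuous fun t ↦ F t v)
    (hrad : ∀ t, (F t).radical = ⊥) :
    IsLocallyConstant fun t ↦ (sigPos (F t) : ℤ) - sigNeg (F t) := by
  refine (IsLocallyConstant.iff_eventually_eq _).2 fun t ↦ ?_
  filter_upwards [eventually_sigPos_eq_and_sigNeg_eq hF (hrad t)] with u ⟨hpos, hneg⟩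
  rw [hpos, hneg]

end QuadraticFormFamily

section BilinForm

lemma radical_toQuadraticMap_eq_bot_iff {R M : Type*} [CommRing R] [Invertible (2 : R)]
    [AddCommGroup M] [Module R M] {B : BilinForm R M} (hB : B.IsSymm) :
    B.toQuadraticMap.radical = ⊥ ↔ B.SeparatingLeft := by
  rw [radical_eq_ker_associated, associated_left_inverse R hB.eq,
    LinearMap.separatingLeft_iff_ker_eq_bot]

lemma separatingLeft_restrict_of_iSup_eq_top {R M ι : Type*} [CommRing R] [AddCommGroup M]
    [Module R M] {B : BilinForm R M} (hB : B.SeparatingLeft) {S : ι → Submodule R M}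
    (hS : ⨆ i, S i = ⊤) (hortho : ∀ i j, i ≠ j → ∀ x ∈ S i, ∀ y ∈ S j, B x y = 0) (i : ι) :
    (B.restrict (S i)).SeparatingLeft := by
  intro x hx
  have hle : ∀ j, S j ≤ (B x).ker := fun j y hy ↦ by
    by_cases hij : i = j
    · subst hij
      exact hx ⟨y, hy⟩
    · exact hortho i j hij x x.2 y hy
  have hker : (B x).ker = ⊤ := top_le_iff.1 (hS ▸ iSup_le hle)
  exact Subtype.ext (hB x fun y ↦ LinearMap.mem_ker.1 (hker ▸ Submodule.mem_top))

variable {M : Type} [AddCommGroup M] [Module ℝ M]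

lemma maxPosDim_eq_sigPos (B : BilinForm ℝ M) (S : Submodule ℝ M) [FiniteDimensional ℝ S] :
    maxPosDim (fun x y ↦ B x y) S = sigPos (B.restrict S).toQuadraticMap := by
  refine IsGreatest.csSup_eq ?_
  convert! sigPos_isGreatest (B.restrict S).toQuadraticMap using 1
  ext m
  constructor
  · rintro ⟨T, hTS, rfl, hT⟩
    refine ⟨T.comap S.subtype, (Submodule.comapSubtypeEquivOfLe hTS).finrank_eq, ?_⟩
    exact fun x hx ↦ hT x x.2 (by simpa using hx)
  · rintro ⟨T, rfl, hT⟩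
    refine ⟨T.map S.subtype, Submodule.map_subtype_le _ _, Submodule.finrank_map_subtype_eq _ _, ?_⟩
    rintro _ ⟨x, hx, rfl⟩ hx0
    exact hT ⟨x, hx⟩ (by simpa using hx0)

lemma maxNegDim_eq_sigNeg (B : BilinForm ℝ M) (S : Submodule ℝ M) [FiniteDimensional ℝ S] :
    maxNegDim (fun x y ↦ B x y) S = sigNeg (B.restrict S).toQuadraticMap := by
  have hneg : maxNegDim (fun x y ↦ B x y) S = maxPosDim (fun x y ↦ (-B) x y) S := by
    simp only [maxNegDim, maxPosDim, LinearMap.neg_apply, neg_pos]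
  rw [hneg, maxPosDim_eq_sigPos]
  rfl

lemma signature_eq_sigPos_sub_sigNeg (B : BilinForm ℝ M) (S : Submodule ℝ M)
    [FiniteDimensional ℝ S] :
    signature (fun x y ↦ B x y) S =
      (sigPos (B.restrict S).toQuadraticMap : ℤ) - sigNeg (B.restrict S).toQuadraticMap := by
  rw [signature, maxPosDim_eq_sigPos, maxNegDim_eq_sigNeg]

end BilinForm

section QSpace

variable {V : Type} [AddCommGroup V] [Module ℝ V] {d : ℕ} {A : ℤ → Submodule ℝ V}

/-- The bilinear form underlying an element of `𝒬`, which the statement encodes as a function of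
two variables. -/
def bilinForm (B : QSpace d A) : BilinForm ℝ (W d A) :=
  LinearMap.mk₂ ℝ B.1 B.2.1 B.2.2.1 B.2.2.2.1 B.2.2.2.2.1

lemma isSymm_bilinForm (B : QSpace d A) : (bilinForm B).IsSymm := ⟨B.2.2.2.2.2.1⟩

lemma continuous_bilinForm_apply (x y : W d A) :
    Continuous fun B : QSpace d A ↦ bilinForm B x y :=
  (continuous_apply_apply x y).comp continuous_subtype_val

variable (d A) in
/-- The summand `A^k` of `⨁_{0 ≤ k ≤ d/2} A^k`, as a subspace of that truncation; it is meaningful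
only for `2 * k ≤ d`. -/
def gradedPiece (k : ℕ) : Submodule ℝ (W d A) := (A k).comap (W d A).subtype

lemma iSup_gradedPiece : ⨆ k : {k : ℕ // 2 * k ≤ d}, gradedPiece d A k = ⊤ := by
  have hle (k : {k : ℕ // 2 * k ≤ d}) : A (k : ℕ) ≤ W d A :=
    le_iSup₂_of_le (f := fun (k : ℕ) (_ : 2 * k ≤ d) ↦ A (k : ℤ)) k.1 k.2 le_rfl
  apply Submodule.map_injective_of_injective (W d A).injective_subtype
  simp only [Submodule.map_iSup, gradedPiece, Submodule.map_comap_subtype,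
    inf_eq_right.2 (hle _), Submodule.map_subtype_top]
  rw [W, iSup_subtype]

lemma separatingLeft_restrict_gradedPiece {B : QSpace d A} (hB : HLpred d A B.1) {k : ℕ}
    (hk : 2 * k ≤ d) : ((bilinForm B).restrict (gradedPiece d A k)).SeparatingLeft :=
  separatingLeft_restrict_of_iSup_eq_top (B := bilinForm B) hB iSup_gradedPiece
    (fun i j hij x hx y hy ↦ B.2.2.2.2.2.2 i j i.2 j.2 (Subtype.coe_ne_coe.2 hij) x y hx hy)
    (⟨k, hk⟩ : {k : ℕ // 2 * k ≤ d})

variable [FiniteDimensional ℝ (W d A)]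

lemma isOpen_setOf_HLpred : IsOpen {B : QSpace d A | HLpred d A B.1} := by
  have hset : {B : QSpace d A | HLpred d A B.1} =
      {B | (bilinForm B).toQuadraticMap.radical = ⊥} :=
    Set.ext fun B ↦ (radical_toQuadraticMap_eq_bot_iff (isSymm_bilinForm B)).symm
  rw [hset]
  exact isOpen_setOf_radical_eq_bot fun v ↦ continuous_bilinForm_apply v v

lemma isLocallyConstant_signature_gradedPiece {k : ℕ} (hk : 2 * k ≤ d) :
    IsLocallyConstant fun B : {B : QSpace d A // HLpred d A B.1} ↦
      signature B.1.1 (gradedPiece d A k) := by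
  have hsig (B : {B : QSpace d A // HLpred d A B.1}) :=
    signature_eq_sigPos_sub_sigNeg (bilinForm B.1) (gradedPiece d A k)
  refine funext hsig ▸ isLocallyConstant_sigPos_sub_sigNeg (fun v ↦ ?_) fun B ↦ ?_
  · exact (continuous_bilinForm_apply _ _).comp continuous_subtype_val
  · exact (radical_toQuadraticMap_eq_bot_iff ((isSymm_bilinForm B.1).restrict _)).2
      (separatingLeft_restrict_gradedPiece B.2 hk)

lemma isClopen_setOf_HRpred :
    IsClopen {B : {B : QSpace d A // HLpred d A B.1} | HRpred d A B.1.1} := by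
  have : Finite {k : ℕ // 2 * k ≤ d} :=
    ((Set.finite_Iic d).subset fun k (hk : 2 * k ≤ d) ↦ show k ≤ d by lia).to_subtype
  convert! isClopen_iInter_of_finite fun k : {k : ℕ // 2 * k ≤ d} ↦
    (isLocallyConstant_signature_gradedPiece (A := A) k.2).isClopen_fiber
      (∑ i ∈ Finset.range (k + 1),
        (-1 : ℤ) ^ i * ((finrank ℝ (A (i : ℤ)) : ℤ) - (finrank ℝ (A ((i : ℤ) - 1)) : ℤ)))
  ext B
  simp [HRpred, B.2, gradedPiece]

lemma isOpen_setOf_HRpred : IsOpen {B : QSpace d A | HRpred d A B.1} := by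
  have himage : {B : QSpace d A | HRpred d A B.1} =
      Subtype.val '' {B : {B : QSpace d A // HLpred d A B.1} | HRpred d A B.1.1} :=
    Set.Subset.antisymm (fun B hB ↦ ⟨⟨B, hB.1⟩, hB, rfl⟩) (Set.image_subset_iff.2 fun _ hB ↦ hB)
  rw [himage]
  exact isOpen_setOf_HLpred.isOpenMap_subtype_val _ isClopen_setOf_HRpred.isOpen

end QSpace

end S5

open S5 in
theorem statement5_general {V : Type} [AddCommGroup V] [Module ℝ V]
    (d : ℕ) (A : ℤ → Submodule ℝ V) [FiniteDimensional ℝ (W d A)] :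
    IsOpen {B : QSpace d A | HLpred d A B.1} ∧
    IsOpen {B : QSpace d A | HRpred d A B.1} ∧
    IsClosed (Subtype.val ⁻¹' {B : QSpace d A | HRpred d A B.1} :
      Set {B : QSpace d A // HLpred d A B.1}) :=
  ⟨isOpen_setOf_HLpred, isOpen_setOf_HRpred, isClopen_setOf_HRpred.isClosed⟩

open S5 in
/-- the subsets of `𝒬` of forms satisfying `HL`, resp. `HR`, are open in `𝒬`;
moreover the subset of forms satisfying `HR` is closed in the subspace of forms satisfying
`HL`. -/
theorem statement5
    {V : Type} [AddCommGroup V] [Module ℝ V] [FiniteDimensional ℝ V]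
    (d : ℕ) (A : ℤ → Submodule ℝ V)
    (hA : DirectSum.IsInternal A)
    (hAneg : ∀ k : ℤ, k < 0 → A k = ⊥)
    (hWPD : ∀ k : ℤ, finrank ℝ (A k) = finrank ℝ (A (d - k))) :
    IsOpen {B : QSpace d A | HLpred d A B.1} ∧
    IsOpen {B : QSpace d A | HRpred d A B.1} ∧
    IsClosed (Subtype.val ⁻¹' {B : QSpace d A | HRpred d A B.1} :
      Set {B : QSpace d A // HLpred d A B.1}) := by
  exact statement5_general d A
end

section
/- (Zigzag lemma) Let A^{•,•} be a first-quadrant double complex such that the column (A^{b,•}, d') is exact for every b > 0 and the row (A^{•,b'}, d) is exact for every b' > 0. Then for every k there is a canonical isomorphism H^k(A^{0,•}, d') ≅ H^k(A^{•,0}, d). Moreover this isomorphism is natural: if B^{•,•} is another double complex satisfying the same hypotheses and Φ : A^{•,•} → B^{•,•} is a morphism of double complexes (commuting, or anticommuting, with both differentials), then the square formed by the maps induced by Φ on H^k(A^{0,•}), H^k(A^{•,0}), H^k(B^{0,•}), H^k(B^{•,0}) and the canonical isomorphisms commutes. -/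
/-!
Both edge maps out of the total complex, `Htot → Hcol` and `Htot → Hrow`, are isomorphisms, and the
zigzag isomorphism is the composite of one with the inverse of the other: it sends the class of
`w 0` to the class of `w k` whenever `w` is a total cocycle of degree `k`, a description which every
morphism respects. For the column edge the point is that a total cocycle supported in the columns
`b > 0`, which are exact, is a total coboundary: its leading component is killed by `d'`, so
subtracting a coboundary moves the support one column to the right, and the first-quadrant
condition makes this stop. The row edge is the column edge of the transposed double complex.
-/

namespace S10

/-- A first-quadrant double complex of vector spaces over `K`, presented inside an ambient
vector space `V` which is the (internal) direct sum of the bigraded pieces `X b b'`, with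
anticommuting differentials `d` of bidegree `(1,0)` and `d'` of bidegree `(0,1)`. -/
structure DC (K : Type) [Field K] where
  V : Type
  [acg : AddCommGroup V]
  [mod : Module K V]
  X : ℤ → ℤ → Submodule K V
  internal : DirectSum.IsInternal (fun p : ℤ × ℤ => X p.1 p.2)
  vanish : ∀ b b' : ℤ, b < 0 ∨ b' < 0 → X b b' = ⊥
  d : V →ₗ[K] V
  d' : V →ₗ[K] V
  d_mem : ∀ b b' : ℤ, ∀ x ∈ X b b', d x ∈ X (b + 1) b'
  d'_mem : ∀ b b' : ℤ, ∀ x ∈ X b b', d' x ∈ X b (b' + 1)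
  dd : ∀ x, d (d x) = 0
  d'd' : ∀ x, d' (d' x) = 0
  anticomm : ∀ x, d (d' x) + d' (d x) = 0

attribute [instance] DC.acg DC.mod

variable {K : Type} [Field K]

/-- cocycles of the `0`-th column, in degree `k` -/
def Zcol (A : DC K) (k : ℤ) : Submodule K A.V := A.X 0 k ⊓ LinearMap.ker A.d'

/-- coboundaries of the `0`-th column, in degree `k` -/
def Bcol (A : DC K) (k : ℤ) : Submodule K A.V := Submodule.map A.d' (A.X 0 (k - 1))

/-- cocycles of the `0`-th row, in degree `k` -/
def Zrow (A : DC K) (k : ℤ) : Submodule K A.V := A.X k 0 ⊓ LinearMap.ker A.d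

/-- coboundaries of the `0`-th row, in degree `k` -/
def Brow (A : DC K) (k : ℤ) : Submodule K A.V := Submodule.map A.d (A.X (k - 1) 0)

/-- `H^k(A^{0,•}, d')` -/
abbrev Hcol (A : DC K) (k : ℤ) : Type :=
  ↥(Zcol A k) ⧸ (Bcol A k).comap (Zcol A k).subtype

/-- `H^k(A^{•,0}, d)` -/
abbrev Hrow (A : DC K) (k : ℤ) : Type :=
  ↥(Zrow A k) ⧸ (Brow A k).comap (Zrow A k).subtype

/-- The column `(A^{b,•}, d')` is exact for every `b > 0`, and the row `(A^{•,b'}, d)` is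
exact for every `b' > 0`. -/
def ColsRowsExact (A : DC K) : Prop :=
  (∀ b : ℤ, 0 < b → ∀ b' : ℤ, ∀ x ∈ A.X b b', A.d' x = 0 →
    ∃ y ∈ A.X b (b' - 1), A.d' y = x) ∧
  (∀ b' : ℤ, 0 < b' → ∀ b : ℤ, ∀ x ∈ A.X b b', A.d x = 0 →
    ∃ y ∈ A.X (b - 1) b', A.d y = x)

/-- A morphism of double complexes, commuting (or anticommuting) with both differentials. -/
def IsHom (A B : DC K) (Φ : A.V →ₗ[K] B.V) : Prop :=
  (∀ b b' : ℤ, ∀ x ∈ A.X b b', Φ x ∈ B.X b b') ∧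
  (((∀ x, Φ (A.d x) = B.d (Φ x)) ∧ (∀ x, Φ (A.d' x) = B.d' (Φ x))) ∨
   ((∀ x, Φ (A.d x) = - B.d (Φ x)) ∧ (∀ x, Φ (A.d' x) = - B.d' (Φ x))))

end S10

namespace S10

variable {K : Type} [Field K]

section Total

variable {A : DC K} {k : ℤ}

lemma DC.eq_zero_of_mem {b b' : ℤ} {x : A.V} (hx : x ∈ A.X b b') (h : b < 0 ∨ b' < 0) : x = 0 := by
  rwa [A.vanish b b' h, Submodule.mem_bot] at hx

/-- The total differential `d + d'`, on families indexed by the column number. -/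
def totD (A : DC K) : (ℤ → A.V) →ₗ[K] (ℤ → A.V) :=
  LinearMap.pi fun b => A.d ∘ₗ LinearMap.proj (b - 1) + A.d' ∘ₗ LinearMap.proj b

/-- Cochains of degree `k` of the total complex: the component in column `b` is `w b`. No finiteness
condition is imposed, since only the columns `0 ≤ b ≤ k` contribute. -/
def Ctot (A : DC K) (k : ℤ) : Submodule K (ℤ → A.V) :=
  Submodule.pi Set.univ fun b => A.X b (k - b)

/-- Cocycles of the total complex, in degree `k`. -/
def Ztot (A : DC K) (k : ℤ) : Submodule K (ℤ → A.V) := Ctot A k ⊓ LinearMap.ker (totD A)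

/-- Coboundaries of the total complex, in degree `k`. -/
def Btot (A : DC K) (k : ℤ) : Submodule K (ℤ → A.V) := Submodule.map (totD A) (Ctot A (k - 1))

/-- The cohomology of the total complex, in degree `k`. -/
abbrev Htot (A : DC K) (k : ℤ) : Type :=
  ↥(Ztot A k) ⧸ (Btot A k).comap (Ztot A k).subtype

lemma totD_apply (w : ℤ → A.V) (b : ℤ) : totD A w b = A.d (w (b - 1)) + A.d' (w b) := rfl

lemma mem_Ctot {w : ℤ → A.V} : w ∈ Ctot A k ↔ ∀ b, w b ∈ A.X b (k - b) := by
  simp only [Ctot, Submodule.mem_pi, Set.mem_univ, true_imp_iff]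

lemma totD_totD (w : ℤ → A.V) : totD A (totD A w) = 0 := by
  funext b
  simp only [totD_apply, map_add, A.dd, A.d'd', zero_add, add_zero, A.anticomm, Pi.zero_apply]

lemma totD_mem_Ctot {w : ℤ → A.V} (hw : w ∈ Ctot A (k - 1)) : totD A w ∈ Ctot A k := by
  rw [mem_Ctot] at hw ⊢
  intro b
  have hd := A.d_mem _ _ _ (hw (b - 1))
  have hd' := A.d'_mem _ _ _ (hw b)
  rw [sub_add_cancel, sub_sub_sub_cancel_right] at hd
  rw [sub_right_comm, sub_add_cancel] at hd'
  exact add_mem hd hd'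

lemma Btot_le_Ztot : Btot A k ≤ Ztot A k := by
  rintro _ ⟨w, hw, rfl⟩
  exact ⟨totD_mem_Ctot hw, totD_totD w⟩

lemma single_mem_Ctot {b : ℤ} {x : A.V} (hx : x ∈ A.X b (k - b)) : Pi.single b x ∈ Ctot A k := by
  rw [mem_Ctot]
  intro c
  obtain rfl | hc := eq_or_ne c b
  · rwa [Pi.single_eq_same]
  · rw [Pi.single_eq_of_ne hc]
    exact zero_mem _

lemma totD_single_same (b : ℤ) (x : A.V) : totD A (Pi.single b x) b = A.d' x := by
  simp [totD_apply]

lemma totD_single_of_lt {b c : ℤ} (h : c < b) (x : A.V) : totD A (Pi.single b x) c = 0 := by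
  simp [totD_apply, Pi.single_eq_of_ne h.ne, Pi.single_eq_of_ne (show c - 1 ≠ b by omega)]

lemma sub_totD_single_eq_zero {p : ℤ} {z : ℤ → A.V} {y : A.V} (hzp : ∀ b < p, z b = 0)
    (hy : A.d' y = z p) : ∀ b < p + 1, (z - totD A (Pi.single p y)) b = 0 := by
  intro b hb
  obtain hb | rfl := (Int.lt_add_one_iff.mp hb).lt_or_eq
  · rw [Pi.sub_apply, hzp b hb, totD_single_of_lt hb, sub_zero]
  · rw [Pi.sub_apply, totD_single_same, hy, sub_self]

/-- The column `(A^{b,•}, d')` is exact for every `b > 0`: the half of `ColsRowsExact` needed to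
compare the total complex with the `0`-th column. -/
def ColsExact (A : DC K) : Prop :=
  ∀ b : ℤ, 0 < b → ∀ b' : ℤ, ∀ x ∈ A.X b b', A.d' x = 0 → ∃ y ∈ A.X b (b' - 1), A.d' y = x

lemma ColsExact.exists_totD_eq_of_forall_lt (hA : ColsExact A) {p : ℤ} (hp : 0 < p) {z : ℤ → A.V}
    (hz : z ∈ Ztot A k) (hzp : ∀ b < p, z b = 0) :
    ∃ u ∈ Ctot A (k - 1), (∀ b < p, u b = 0) ∧ totD A u = z := by
  obtain ⟨n, hn⟩ : ∃ n : ℕ, k < p + n := ⟨(k - p + 1).toNat, by omega⟩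
  induction n generalizing p z with
  | zero =>
    have hz0 : z = 0 := by
      funext b
      obtain hb | hb := lt_or_ge b p
      · exact hzp b hb
      · exact DC.eq_zero_of_mem (mem_Ctot.mp hz.1 b) (Or.inr (by omega))
    exact ⟨0, zero_mem _, fun _ _ => rfl, by rw [map_zero, hz0]⟩
  | succ n ih =>
    have hzp' : A.d' (z p) = 0 := by
      have h := congrFun (LinearMap.mem_ker.mp hz.2) p
      rwa [totD_apply, hzp (p - 1) (by omega), map_zero, zero_add] at h
    obtain ⟨y, hy, hyz⟩ := hA p hp _ _ (mem_Ctot.mp hz.1 p) hzp'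
    have hy' : Pi.single p y ∈ Ctot A (k - 1) := single_mem_Ctot (by rwa [sub_right_comm])
    obtain ⟨u, hu, hup, huz⟩ := ih (p := p + 1) (by omega)
      (sub_mem hz (Btot_le_Ztot (Submodule.mem_map_of_mem hy')))
      (sub_totD_single_eq_zero hzp hyz) (by push_cast at hn; omega)
    refine ⟨Pi.single p y + u, add_mem hy' hu, fun b hb => ?_, ?_⟩
    · rw [Pi.add_apply, Pi.single_eq_of_ne hb.ne, hup b (by omega), add_zero]
    · rw [map_add, huz, add_sub_cancel]

lemma ColsExact.exists_totD_eq (hA : ColsExact A) {z : ℤ → A.V} (hz : z ∈ Ztot A k) {x : A.V}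
    (hx : x ∈ A.X 0 (k - 1)) (hxz : A.d' x = z 0) :
    ∃ u ∈ Ctot A (k - 1), u 0 = x ∧ totD A u = z := by
  have hx' : Pi.single 0 x ∈ Ctot A (k - 1) := single_mem_Ctot (by rwa [sub_zero])
  have hz0 : ∀ b < 0, z b = 0 := fun b hb => DC.eq_zero_of_mem (mem_Ctot.mp hz.1 b) (Or.inl hb)
  obtain ⟨u, hu, hu0, huz⟩ := hA.exists_totD_eq_of_forall_lt zero_lt_one
    (sub_mem hz (Btot_le_Ztot (Submodule.mem_map_of_mem hx'))) (sub_totD_single_eq_zero hz0 hxz)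
  refine ⟨Pi.single 0 x + u, add_mem hx' hu, ?_, ?_⟩
  · rw [Pi.add_apply, Pi.single_eq_same, hu0 0 zero_lt_one, add_zero]
  · rw [map_add, huz, add_sub_cancel]

lemma totD_apply_zero {w : ℤ → A.V} (hw : w ∈ Ctot A k) : totD A w 0 = A.d' (w 0) := by
  rw [totD_apply, DC.eq_zero_of_mem (mem_Ctot.mp hw (0 - 1)) (Or.inl (by omega)), map_zero,
    zero_add]

lemma apply_zero_mem {w : ℤ → A.V} (hw : w ∈ Ctot A k) : w 0 ∈ A.X 0 k := by
  simpa only [sub_zero] using mem_Ctot.mp hw 0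

lemma apply_zero_mem_Zcol {w : ℤ → A.V} (hw : w ∈ Ztot A k) : w 0 ∈ Zcol A k := by
  refine ⟨apply_zero_mem hw.1, LinearMap.mem_ker.mpr ?_⟩
  rw [← totD_apply_zero hw.1, LinearMap.mem_ker.mp hw.2, Pi.zero_apply]

/-- The edge map from the total complex to the `0`-th column, on cocycles. -/
def colEdge (A : DC K) (k : ℤ) : Ztot A k →ₗ[K] Zcol A k :=
  (LinearMap.proj 0).restrict fun _ => apply_zero_mem_Zcol

lemma ColsExact.colEdge_surjective (hA : ColsExact A) (k : ℤ) :
    Function.Surjective (colEdge A k) := by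
  rintro ⟨x, hx, hdx⟩
  obtain ⟨w, hw, hwx, hDw⟩ := hA.exists_totD_eq (zero_mem (Ztot A (k + 1))) (x := x)
    (by rwa [add_sub_cancel_right]) hdx
  rw [add_sub_cancel_right] at hw
  exact ⟨⟨w, hw, hDw⟩, Subtype.ext hwx⟩

lemma ColsExact.apply_zero_mem_Bcol_iff (hA : ColsExact A) {w : ℤ → A.V} (hw : w ∈ Ztot A k) :
    w 0 ∈ Bcol A k ↔ w ∈ Btot A k := by
  constructor
  · rintro ⟨x, hx, hxw⟩
    obtain ⟨u, hu, -, huw⟩ := hA.exists_totD_eq hw hx hxw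
    exact ⟨u, hu, huw⟩
  · rintro ⟨u, hu, rfl⟩
    exact ⟨u 0, apply_zero_mem hu, (totD_apply_zero hu).symm⟩

/-- The edge isomorphism from the cohomology of the total complex to that of the `0`-th column. -/
noncomputable def totEquivCol (A : DC K) (hA : ColsExact A) (k : ℤ) : Htot A k ≃ₗ[K] Hcol A k :=
  Submodule.quotEquivOfEq _ _ (by
      ext w
      rw [LinearMap.mem_ker, LinearMap.comp_apply, Submodule.mkQ_apply,
        Submodule.Quotient.mk_eq_zero]
      exact (hA.apply_zero_mem_Bcol_iff w.2).symm) ≪≫ₗ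
    LinearMap.quotKerEquivOfSurjective (Submodule.mkQ _ ∘ₗ colEdge A k)
      ((Submodule.mkQ_surjective _).comp (hA.colEdge_surjective k))

lemma totEquivCol_mk (hA : ColsExact A) (w : Ztot A k) :
    totEquivCol A hA k (Submodule.Quotient.mk w) = Submodule.Quotient.mk (colEdge A k w) := rfl

end Total

section Transpose

variable {A : DC K} {k : ℤ}

/-- The double complex with rows and columns exchanged, so that `Hcol A.transpose k` is `Hrow A k`
by definition. It is reducible so that its ambient module is recognised as that of `A`. -/
abbrev DC.transpose (A : DC K) : DC K where
  V := A.V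
  X b b' := A.X b' b
  internal := by
    have h := (DirectSum.isInternal_submodule_iff_iSupIndep_and_iSup_eq_top _).mp A.internal
    rw [DirectSum.isInternal_submodule_iff_iSupIndep_and_iSup_eq_top]
    exact ⟨h.1.comp Prod.swap_injective, (Prod.swap_surjective.iSup_comp _).trans h.2⟩
  vanish b b' h := A.vanish b' b h.symm
  d := A.d'
  d' := A.d
  d_mem b b' := A.d'_mem b' b
  d'_mem b b' := A.d_mem b' b
  dd := A.d'd'
  d'd' := A.dd
  anticomm x := (add_comm _ _).trans (A.anticomm x)

/-- The identification of total cochains of degree `k` of `A` and `A.transpose`: the component in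
column `b` is the one in row `k - b`. -/
def reflect (A : DC K) (k : ℤ) : (ℤ → A.V) →ₗ[K] (ℤ → A.transpose.V) :=
  LinearMap.funLeft K A.V (k - ·)

lemma reflect_apply (w : ℤ → A.V) (b : ℤ) : reflect A k w b = w (k - b) := rfl

lemma reflect_reflect (w : ℤ → A.V) : reflect A.transpose k (reflect A k w) = w := by
  funext b
  rw [reflect_apply, reflect_apply, sub_sub_cancel]

lemma reflect_mem_Ctot {w : ℤ → A.V} (hw : w ∈ Ctot A k) : reflect A k w ∈ Ctot A.transpose k := by
  rw [mem_Ctot] at hw ⊢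
  intro b
  have h := hw (k - b)
  rwa [sub_sub_cancel] at h

lemma totD_reflect (w : ℤ → A.V) :
    totD A.transpose (reflect A (k - 1) w) = reflect A k (totD A w) := by
  funext b
  rw [totD_apply, reflect_apply, reflect_apply, reflect_apply, totD_apply,
    sub_sub_sub_cancel_right, sub_right_comm, add_comm]

lemma reflect_mem_Ztot {w : ℤ → A.V} (hw : w ∈ Ztot A k) : reflect A k w ∈ Ztot A.transpose k := by
  refine ⟨reflect_mem_Ctot hw.1, ?_⟩
  have h := totD_reflect (k := k + 1) w
  rwa [LinearMap.mem_ker.mp hw.2, map_zero, add_sub_cancel_right] at h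

lemma reflect_mem_Btot {w : ℤ → A.V} (hw : w ∈ Btot A k) : reflect A k w ∈ Btot A.transpose k := by
  obtain ⟨u, hu, rfl⟩ := hw
  exact ⟨reflect A (k - 1) u, reflect_mem_Ctot hu, totD_reflect u⟩

/-- Reflection of total cocycles. -/
def reflectZtot (A : DC K) (k : ℤ) : Ztot A k →ₗ[K] Ztot A.transpose k :=
  (reflect A k).restrict fun _ => reflect_mem_Ztot

/-- The map induced by reflection on the cohomology of the total complex. -/
def reflectHtot (A : DC K) (k : ℤ) : Htot A k →ₗ[K] Htot A.transpose k :=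
  Submodule.mapQ _ _ (reflectZtot A k) fun _ => reflect_mem_Btot

lemma reflectHtot_reflectHtot (ξ : Htot A k) :
    reflectHtot A.transpose k (reflectHtot A k ξ) = ξ := by
  obtain ⟨w, rfl⟩ := Submodule.Quotient.mk_surjective _ ξ
  exact congrArg Submodule.Quotient.mk (Subtype.ext (reflect_reflect w.1))

/-- The total complexes of `A` and `A.transpose` have the same cohomology. -/
def totEquivTranspose (A : DC K) (k : ℤ) : Htot A k ≃ₗ[K] Htot A.transpose k :=
  LinearEquiv.ofLinearMap (reflectHtot A k) (reflectHtot A.transpose k)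
    (LinearMap.ext reflectHtot_reflectHtot) (LinearMap.ext reflectHtot_reflectHtot)

/-- The edge map from the total complex to the `0`-th row, on cocycles. -/
def rowEdge (A : DC K) (k : ℤ) : Ztot A k →ₗ[K] Zrow A k :=
  colEdge A.transpose k ∘ₗ reflectZtot A k

end Transpose

section Zigzag

variable {A B : DC K}

lemma ColsRowsExact.colsExact (hA : ColsRowsExact A) : ColsExact A := hA.1

lemma ColsRowsExact.colsExact_transpose (hA : ColsRowsExact A) : ColsExact A.transpose := hA.2

/-- The zigzag isomorphism, from column to row through the cohomology of the total complex. -/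
noncomputable def zigzag (A : DC K) (hA : ColsRowsExact A) (k : ℤ) : Hcol A k ≃ₗ[K] Hrow A k :=
  (totEquivCol A hA.colsExact k).symm ≪≫ₗ totEquivTranspose A k ≪≫ₗ
    totEquivCol A.transpose hA.colsExact_transpose k

lemma zigzag_mk_colEdge (hA : ColsRowsExact A) {k : ℤ} (w : Ztot A k) :
    zigzag A hA k (Submodule.Quotient.mk (colEdge A k w)) =
      Submodule.Quotient.mk (rowEdge A k w) := by
  have h : (totEquivCol A hA.colsExact k).symm (Submodule.Quotient.mk (colEdge A k w)) =
      Submodule.Quotient.mk w :=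
    (LinearEquiv.symm_apply_eq _).mpr (totEquivCol_mk hA.colsExact w).symm
  exact congrArg
    (totEquivTranspose A k ≪≫ₗ totEquivCol A.transpose hA.colsExact_transpose k) h

variable {Φ : A.V →ₗ[K] B.V}

lemma IsHom.exists_scalar (hΦ : IsHom A B Φ) :
    ∃ ε : K, ε ≠ 0 ∧ (∀ x, Φ (A.d x) = ε • B.d (Φ x)) ∧ ∀ x, Φ (A.d' x) = ε • B.d' (Φ x) := by
  obtain ⟨-, ⟨hd, hd'⟩ | ⟨hd, hd'⟩⟩ := hΦ
  · exact ⟨1, one_ne_zero, by simpa only [one_smul], by simpa only [one_smul]⟩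
  · exact ⟨-1, neg_ne_zero.mpr one_ne_zero, by simpa only [neg_one_smul],
      by simpa only [neg_one_smul]⟩

lemma IsHom.transpose (hΦ : IsHom A B Φ) : IsHom A.transpose B.transpose Φ :=
  ⟨fun b b' => hΦ.1 b' b, hΦ.2.imp And.symm And.symm⟩

lemma IsHom.map_mem_Zcol (hΦ : IsHom A B Φ) {k : ℤ} {x : A.V} (hx : x ∈ Zcol A k) :
    Φ x ∈ Zcol B k := by
  obtain ⟨ε, hε, -, hd'⟩ := hΦ.exists_scalar
  refine ⟨hΦ.1 _ _ _ hx.1, (smul_eq_zero.mp ?_).resolve_left hε⟩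
  rw [← hd', LinearMap.mem_ker.mp hx.2, map_zero]

lemma IsHom.map_mem_Bcol (hΦ : IsHom A B Φ) {k : ℤ} {x : A.V} (hx : x ∈ Bcol A k) :
    Φ x ∈ Bcol B k := by
  obtain ⟨ε, -, -, hd'⟩ := hΦ.exists_scalar
  obtain ⟨y, hy, rfl⟩ := hx
  exact ⟨ε • Φ y, Submodule.smul_mem _ _ (hΦ.1 _ _ _ hy), by rw [map_smul, hd']⟩

lemma IsHom.comp_mem_Ztot (hΦ : IsHom A B Φ) {k : ℤ} {w : ℤ → A.V} (hw : w ∈ Ztot A k) :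
    Φ ∘ w ∈ Ztot B k := by
  obtain ⟨ε, hε, hd, hd'⟩ := hΦ.exists_scalar
  have hcomm : Φ ∘ totD A w = ε • totD B (Φ ∘ w) := by
    funext b
    simp only [Function.comp_apply, Pi.smul_apply, totD_apply, map_add, hd, hd', smul_add]
  refine ⟨mem_Ctot.mpr fun b => hΦ.1 _ _ _ (mem_Ctot.mp hw.1 b),
    (smul_eq_zero.mp ?_).resolve_left hε⟩
  funext b
  rw [← hcomm, LinearMap.mem_ker.mp hw.2, Function.comp_apply, Pi.zero_apply, map_zero,
    Pi.zero_apply]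

/-- The map induced by a morphism on the cocycles of the `0`-th column. -/
def IsHom.mapZcol (hΦ : IsHom A B Φ) (k : ℤ) : Zcol A k →ₗ[K] Zcol B k :=
  Φ.restrict fun _ => hΦ.map_mem_Zcol

/-- The map induced by a morphism on the cocycles of the `0`-th row. -/
def IsHom.mapZrow (hΦ : IsHom A B Φ) (k : ℤ) : Zrow A k →ₗ[K] Zrow B k :=
  hΦ.transpose.mapZcol k

/-- The map induced by a morphism on the cohomology of the `0`-th column. -/
def IsHom.mapHcol (hΦ : IsHom A B Φ) (k : ℤ) : Hcol A k →ₗ[K] Hcol B k :=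
  Submodule.mapQ _ _ (hΦ.mapZcol k) fun _ => hΦ.map_mem_Bcol

/-- The map induced by a morphism on the cohomology of the `0`-th row. -/
def IsHom.mapHrow (hΦ : IsHom A B Φ) (k : ℤ) : Hrow A k →ₗ[K] Hrow B k :=
  hΦ.transpose.mapHcol k

theorem zigzag_mapHcol (hA : ColsRowsExact A) (hB : ColsRowsExact B) (hΦ : IsHom A B Φ) (k : ℤ)
    (ξ : Hcol A k) :
    zigzag B hB k (hΦ.mapHcol k ξ) = hΦ.mapHrow k (zigzag A hA k ξ) := by
  obtain ⟨x, rfl⟩ := Submodule.Quotient.mk_surjective _ ξ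
  obtain ⟨w, rfl⟩ := hA.colsExact.colEdge_surjective k x
  rw [zigzag_mk_colEdge hA w]
  exact zigzag_mk_colEdge hB ⟨Φ ∘ w, hΦ.comp_mem_Ztot w.2⟩

end Zigzag

end S10

open S10 in
/-- zigzag lemma: for every first-quadrant double complex whose columns
`(A^{b,•}, d')`, `b > 0`, and rows `(A^{•,b'}, d)`, `b' > 0`, are exact, there is a canonical
isomorphism `H^k(A^{0,•}, d') ≅ H^k(A^{•,0}, d)` for every `k`; and this isomorphism is
natural with respect to morphisms of double complexes (commuting or anticommuting with both
differentials). -/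
theorem statement10 (K : Type) [Field K] :
    ∃ e : ∀ (A : DC K), ColsRowsExact A → ∀ k : ℤ, Hcol A k ≃ₗ[K] Hrow A k,
      ∀ (A B : DC K) (hA : ColsRowsExact A) (hB : ColsRowsExact B)
        (Φ : A.V →ₗ[K] B.V), IsHom A B Φ →
        ∀ (k : ℤ) (x : Zcol A k) (y : Zrow A k),
          e A hA k (Submodule.Quotient.mk x) = Submodule.Quotient.mk y →
          ∀ (x' : Zcol B k) (y' : Zrow B k),
            (x' : B.V) = Φ (x : A.V) → (y' : B.V) = Φ (y : A.V) →
            e B hB k (Submodule.Quotient.mk x') = Submodule.Quotient.mk y' := by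
  refine ⟨zigzag, fun A B hA hB Φ hΦ k x y hxy x' y' hx' hy' => ?_⟩
  obtain rfl : x' = hΦ.mapZcol k x := Subtype.ext hx'
  obtain rfl : y' = hΦ.mapZrow k y := Subtype.ext hy'
  calc zigzag B hB k (hΦ.mapHcol k (Submodule.Quotient.mk x))
      = hΦ.mapHrow k (zigzag A hA k (Submodule.Quotient.mk x)) := zigzag_mapHcol hA hB hΦ k _
    _ = hΦ.mapHrow k (Submodule.Quotient.mk y) := congrArg _ hxy
end
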